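/- arXiv:math/0410282 — 5 statements merged into one kernel-verified Lean document; each statement's English description precedes it below -/
import Mathlib

section
/- In the nonmonotone ensemble on the wrapped extended butterfly Ω_{H,W} with W = H (H = 2^d), pick a uniformly random time slice t₀ and then m vertices chosen independently and uniformly at random from slice t₀; from each chosen vertex, follow the unique outgoing edges of the random subgraph forward until the path revisits a previously visited vertex (hence enters a directed cycle). There is a universal constant C such that the expected number of directed cycles of the random subgraph containing no vertex visited by any of these m paths is at most C/(m+1). -/
/-- The step map of the random out-degree-one subgraph of the wrapped extended
butterfly `Ω_{H,W}` in the nonmonotone ensemble: the vertex `(h, t)` moves to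
`(2h + β(h,t), t + 1)`, where the input bit `β(h,t)` selects which of the two
outgoing edges is kept (it is the parity of the first coordinate of the
destination). -/
def bstep (H W : ℕ) (β : ZMod H × ZMod W → Bool) (v : ZMod H × ZMod W) :
    ZMod H × ZMod W :=
  (2 * v.1 + (if β v then 1 else 0), v.2 + 1)

/-- A point lies on a directed cycle of the functional graph of `g` iff it is
periodic. -/
def onCycle {α : Type*} (g : α → α) (v : α) : Prop := ∃ k, 0 < k ∧ g^[k] v = v

/-!
Fix the slice `t`. Reading the `2 ^ d` layers of bits from `t` onwards composes independent random
layer maps into a return map of the slice, and the directed cycles that avoid the `m` paths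
correspond to cycles of the return map that avoid its values at the `m` starting points. The layers
are read in three parts.

* In the first part the walkers coalesce. As long as walkers have not met they use independent bits,
  and a pair meets in a window of `2 * d` layers with probability `δ / 2`, where `δ = d / 2 ^ d`. So
  the expected range comes down from infinity and is bounded after about `1 / δ` windows. By
  exchangeability a given vertex then avoids `m` random starting points with probability
  `O(1 / (m + 1))`.
* In the second part the `k + 1` vertices of a cycle must not merge. By the second moment method
  this has probability at most `1 / (1 + J * (k + 1).choose 2 * δ / 2)` for `J` windows, which is
  summable over `k` when `J * δ` is bounded below.
* The last `d` layers replace all the digits of a vertex, so that unmerged walkers end at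
  independent uniform vertices. They close the cycle with probability `(2 ^ d) ^ (-(k + 1))`, which
  cancels the number of candidates for its vertices.
-/

namespace Butterfly

open Finset Function
open scoped BigOperators

section Probability

variable {Ω Ω' α β γ ι κ : Type*} [Fintype Ω] [Fintype Ω'] [Fintype ι] [Fintype κ] [Fintype α]
  [Fintype β] [DecidableEq ι] [DecidableEq κ]

open Classical in
/-- The probability of the event `p` under the uniform distribution on `Ω`. -/
noncomputable def prob (p : Ω → Prop) : ℝ := 𝔼 ω, if p ω then 1 else 0

lemma prob_eq_expect (p : Ω → Prop) [DecidablePred p] : prob p = 𝔼 ω, if p ω then 1 else 0 := by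
  unfold prob
  congr!

lemma prob_mono {p q : Ω → Prop} (h : ∀ ω, p ω → q ω) : prob p ≤ prob q := by
  refine expect_le_expect fun ω _ ↦ ?_
  by_cases hp : p ω
  · simp [hp, h ω hp]
  · simp only [hp, if_false]
    positivity

lemma prob_nonneg (p : Ω → Prop) : 0 ≤ prob p := expect_nonneg fun _ _ ↦ by positivity

lemma prob_le_one (p : Ω → Prop) : prob p ≤ 1 := by
  cases isEmpty_or_nonempty Ω
  · simp [prob]
  · exact expect_le univ_nonempty fun _ _ ↦ by split_ifs <;> norm_num

lemma prob_const_and (P : Prop) [Decidable P] (q : Ω → Prop) :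
    prob (fun ω ↦ P ∧ q ω) = if P then prob q else 0 := by
  split_ifs with hP
  · simp only [hP, true_and]
  · simp [hP, prob_eq_expect]

lemma prob_equiv (e : Ω ≃ Ω') (p : Ω' → Prop) : prob (fun ω ↦ p (e ω)) = prob p :=
  Fintype.expect_equiv e _ _ fun _ ↦ rfl

lemma prob_le_of_subsingleton {p : Ω → Prop} (h : ∀ a b, p a → p b → a = b) :
    prob p ≤ (Fintype.card Ω : ℝ)⁻¹ := by
  classical
  rw [prob_eq_expect, Fintype.expect_eq_sum_div_card, sum_boole, ← one_div]
  gcongr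
  exact_mod_cast card_le_one.2 fun a ha b hb ↦ h a b (mem_filter.1 ha).2 (mem_filter.1 hb).2

lemma prob_eq (a : Ω) : prob (fun ω ↦ ω = a) = (Fintype.card Ω : ℝ)⁻¹ := by
  classical
  simp [prob_eq_expect]

lemma prob_exists_eq_sum (s : Finset γ) (p : γ → Ω → Prop)
    (h : ∀ ω, ∀ i ∈ s, ∀ j ∈ s, p i ω → p j ω → i = j) :
    prob (fun ω ↦ ∃ i ∈ s, p i ω) = ∑ i ∈ s, prob (p i) := by
  classical
  simp only [prob_eq_expect, ← expect_sum_comm]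
  exact expect_congr rfl fun ω _ ↦ (sum_ite_zero s (p · ω) (h ω) 1).symm

lemma expect_prob_comm (p : Ω → Ω' → Prop) :
    𝔼 a, prob (p a) = 𝔼 b, prob (fun a ↦ p a b) :=
  expect_comm _ _ _

lemma expect_prod (f : Ω × Ω' → ℝ) : 𝔼 x, f x = 𝔼 a, 𝔼 b, f (a, b) := by
  rw [← univ_product_univ, expect_product]

lemma expect_update [Nonempty β] (j : ι) (f : (ι → β) → ℝ) :
    𝔼 b, f b = 𝔼 b, 𝔼 c, f (update b j c) := by
  have swap : Involutive fun x : (ι → β) × β ↦ (update x.1 j x.2, x.1 j) := fun x ↦ by simp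
  calc 𝔼 b, f b = 𝔼 x : (ι → β) × β, f x.1 := by simp [expect_prod]
    _ = 𝔼 x : (ι → β) × β, f (update x.1 j x.2) :=
      (Fintype.expect_equiv swap.toPerm _ _ fun _ ↦ rfl).symm
    _ = 𝔼 b, 𝔼 c, f (update b j c) := expect_prod _

lemma prob_update [Nonempty β] (j : ι) (p : (ι → β) → Prop) :
    prob p = 𝔼 b, prob (fun c ↦ p (update b j c)) :=
  expect_update j _

lemma expect_eval [Nonempty β] (j : ι) (f : β → ℝ) : 𝔼 b : ι → β, f (b j) = 𝔼 c, f c := by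
  rw [expect_update j]
  simp

lemma expect_comp_injective [Nonempty β] {y : ι → κ} (hy : Injective y) (f : (ι → β) → ℝ) :
    𝔼 ω : κ → β, f (ω ∘ y) = 𝔼 c, f c := by
  let e : (κ → β) ≃ (ι → β) × (((Set.range y)ᶜ : Set κ) → β) :=
    (((Equiv.ofInjective y hy).sumCongr (Equiv.refl _)).trans
      (Equiv.Set.sumCompl _)).symm.arrowCongr (Equiv.refl β) |>.trans
      (Equiv.sumArrowEquivProdArrow _ _ _)
  calc 𝔼 ω : κ → β, f (ω ∘ y) = 𝔼 x, f x.1 := Fintype.expect_equiv e _ _ fun _ ↦ rfl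
    _ = 𝔼 c, f c := by simp [expect_prod]

lemma prob_comp_injective [Nonempty β] {y : ι → κ} (hy : Injective y) (p : (ι → β) → Prop) :
    prob (fun ω : κ → β ↦ p (ω ∘ y)) = prob p := by
  classical
  simp only [prob_eq_expect]
  exact expect_comp_injective hy fun c ↦ if p c then 1 else 0

lemma prob_forall_mem_eq [Nonempty β] (s : Finset ι) (y : ι → β) :
    prob (fun b : ι → β ↦ ∀ i ∈ s, b i = y i) = ((Fintype.card β : ℝ) ^ #s)⁻¹ := by
  calc prob (fun b : ι → β ↦ ∀ i ∈ s, b i = y i)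
      = prob fun b : ι → β ↦ b ∘ (Subtype.val : s → ι) = y ∘ Subtype.val := by
        simp [funext_iff]
    _ = prob fun c ↦ c = y ∘ (Subtype.val : s → ι) :=
        prob_comp_injective Subtype.val_injective (· = y ∘ (Subtype.val : s → ι))
    _ = ((Fintype.card β : ℝ) ^ #s)⁻¹ := by simp [prob_eq]

lemma prob_forall_not_le [Nonempty Ω] (s : Finset γ) (p : γ → Ω → Prop) {π : ℝ}
    (hp : ∀ i ∈ s, prob (p i) = π)
    (hpair : ∀ i ∈ s, ∀ j ∈ s, i ≠ j → prob (fun ω ↦ p i ω ∧ p j ω) ≤ π ^ 2) :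
    prob (fun ω ↦ ∀ i ∈ s, ¬p i ω) ≤ 1 / (1 + #s * π) := by
  classical
  set X : Ω → ℝ := fun ω ↦ ∑ i ∈ s, if p i ω then 1 else 0 with hX
  set μ : ℝ := #s * π with hμ
  have first : 𝔼 ω, X ω = μ := by
    rw [hX, expect_sum_comm]
    simp [← prob_eq_expect, sum_congr rfl hp, hμ]
  have μ_nonneg : 0 ≤ μ := first ▸ expect_nonneg fun ω _ ↦ sum_nonneg fun i _ ↦ by positivity
  have second : 𝔼 ω, X ω ^ 2 ≤ μ + μ ^ 2 := by
    have cov : ∀ i ∈ s, ∀ j ∈ s,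
        prob (fun ω ↦ p i ω ∧ p j ω) ≤ (if i = j then π else 0) + π ^ 2 := by
      intro i hi j hj
      rcases eq_or_ne i j with rfl | hij
      · simpa [hp i hi] using sq_nonneg π
      · simpa [hij] using hpair i hi j hj hij
    calc 𝔼 ω, X ω ^ 2 = ∑ i ∈ s, ∑ j ∈ s, prob (fun ω ↦ p i ω ∧ p j ω) := by
          simp only [hX, sq, sum_mul_sum, expect_sum_comm, prob_eq_expect,
            ite_zero_mul_ite_zero, mul_one]
      _ ≤ ∑ i ∈ s, ∑ j ∈ s, ((if i = j then π else 0) + π ^ 2) :=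
          sum_le_sum fun i hi ↦ sum_le_sum fun j hj ↦ cov i hi j hj
      _ = μ + μ ^ 2 := by simp [sum_add_distrib, hμ]; ring
  calc prob (fun ω ↦ ∀ i ∈ s, ¬p i ω) ≤ 𝔼 ω, (1 - X ω / (1 + μ)) ^ 2 := by
        rw [prob_eq_expect]
        refine expect_le_expect fun ω _ ↦ ?_
        split_ifs with h
        · have hX0 : X ω = 0 := sum_eq_zero fun i hi ↦ if_neg (h i hi)
          simp [hX0]
        · positivity
    _ = 1 - 2 / (1 + μ) * 𝔼 ω, X ω + (1 / (1 + μ)) ^ 2 * 𝔼 ω, X ω ^ 2 := by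
        have expand (ω : Ω) : (1 - X ω / (1 + μ)) ^ 2 =
            1 - 2 / (1 + μ) * X ω + (1 / (1 + μ)) ^ 2 * X ω ^ 2 := by ring
        simp only [expand, expect_add_distrib, expect_sub_distrib, ← mul_expect,
          Fintype.expect_const]
    _ ≤ 1 - 2 / (1 + μ) * μ + (1 / (1 + μ)) ^ 2 * (μ + μ ^ 2) := by rw [first]; gcongr
    _ = 1 / (1 + μ) := by field_simp; ring

lemma prob_pairwise_not_le [Nonempty β] {R : β → β → Prop} (symm : Std.Symm R) {π : ℝ}
    (hπ : ∀ a, prob (R a) = π) :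
    prob (fun b : ι → β ↦ Pairwise fun i j ↦ ¬R (b i) (b j)) ≤
      1 / (1 + (Fintype.card ι).choose 2 * π) := by
  classical
  set s : Finset (Sym2 ι) := {e | ¬e.IsDiag} with hs
  set p : Sym2 ι → (ι → β) → Prop := fun e b ↦ e.map b ∈ Sym2.fromRel symm
  have resample {i j : ι} (hij : i ≠ j) (b : ι → β) :
      prob (fun c ↦ p s(i, j) (update b j c)) = π := by
    simp [p, hij, hπ]
  have single : ∀ e ∈ s, prob (p e) = π := by
    rintro ⟨i, j⟩ he
    rw [prob_update j]
    simp [resample (show i ≠ j by simpa [hs] using he)]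
  have pair : ∀ e ∈ s, ∀ e' ∈ s, e ≠ e' → prob (fun b ↦ p e b ∧ p e' b) ≤ π ^ 2 := by
    intro e he e' he' hne
    obtain ⟨j, hj, hje⟩ : ∃ j ∈ e', j ∉ e := by
      induction e' with | _ i j
      contrapose! hne
      refine (Sym2.mem_and_mem_iff (by simpa [hs] using he')).1 ⟨hne i ?_, hne j ?_⟩ <;> simp
    obtain ⟨i, rfl⟩ := Sym2.mem_iff_exists.1 hj
    have unaffected (b : ι → β) (c : β) : p e (update b j c) ↔ p e b := by
      induction e with | _ k l
      simp only [Sym2.mem_iff, not_or] at hje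
      simp [p, Ne.symm hje.1, Ne.symm hje.2]
    have hij : i ≠ j := by simpa [hs, eq_comm] using he'
    rw [prob_update j]
    simp only [unaffected, prob_const_and, Sym2.eq_swap (a := j), resample hij]
    simp only [← boole_mul _ π, ← expect_mul]
    rw [← prob_eq_expect, single e he, sq]
  have edges : #s = (Fintype.card ι).choose 2 := by
    rw [← Sym2.card_subtype_not_diag, Fintype.card_subtype]
  rw [← edges]
  refine (prob_mono fun b hb e he ↦ ?_).trans (prob_forall_not_le s p single pair)
  induction e with | _ i j
  exact hb (by simpa [hs] using he)

end Probability

section Images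

variable {Ω α β : Type*} [Fintype Ω] [Nonempty Ω] [DecidableEq β]

lemma card_image_add_one_le_card {f : α → β} {s : Finset α} (h : ¬Set.InjOn f s) :
    #(s.image f) + 1 ≤ #s :=
  Nat.lt_of_le_of_ne card_image_le fun he ↦ h (card_image_iff.1 he)

lemma expect_card_image_le_of_injOn (g : Ω → α → β) (s : Finset α) {ρ : ℝ}
    (hρ : prob (fun ω ↦ Set.InjOn (g ω) s) ≤ ρ) :
    𝔼 ω, (#(s.image (g ω)) : ℝ) ≤ #s - (1 - ρ) := by
  classical
  calc 𝔼 ω, (#(s.image (g ω)) : ℝ)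
      ≤ 𝔼 ω, ((#s - 1) + if Set.InjOn (g ω) s then 1 else 0 : ℝ) := by
        refine expect_le_expect fun ω _ ↦ ?_
        split_ifs with h
        · simpa using card_image_le
        · rw [add_zero, le_sub_iff_add_le]
          exact_mod_cast card_image_add_one_le_card h
    _ = #s - 1 + prob (fun ω ↦ Set.InjOn (g ω) s) := by
        rw [expect_add_distrib, Fintype.expect_const, prob_eq_expect]
    _ ≤ #s - (1 - ρ) := by linarith

lemma expect_card_image_le (g : Ω → α → β) {k : ℕ} {ρ : ℝ}
    (hρ : ∀ s : Finset α, #s = k → prob (fun ω ↦ Set.InjOn (g ω) s) ≤ ρ) (q : ℕ) (s : Finset α)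
    (hs : q * k ≤ #s) : 𝔼 ω, (#(s.image (g ω)) : ℝ) ≤ #s - q * (1 - ρ) := by
  classical
  induction q generalizing s with
  | zero =>
    simpa using expect_le univ_nonempty fun ω _ ↦ Nat.cast_le.2 card_image_le
  | succ q ih =>
    obtain ⟨t, hts, rfl⟩ := exists_subset_card_eq ((Nat.le_mul_of_pos_left k q.succ_pos).trans hs)
    have card_split : (#(s \ t) : ℝ) + #t = #s := mod_cast card_sdiff_add_card_eq_card hts
    calc 𝔼 ω, (#(s.image (g ω)) : ℝ)
        ≤ 𝔼 ω, (#((s \ t).image (g ω)) + #(t.image (g ω)) : ℝ) := by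
          refine expect_le_expect fun ω _ ↦ ?_
          nth_rw 1 [← sdiff_union_of_subset hts, image_union]
          exact_mod_cast card_union_le _ _
      _ ≤ (#(s \ t) - q * (1 - ρ)) + (#t - (1 - ρ)) := by
          rw [expect_add_distrib]
          refine add_le_add (ih _ ?_) (expect_card_image_le_of_injOn g t (hρ t rfl))
          linarith [card_sdiff_add_card_eq_card hts]
      _ = #s - ↑(q + 1) * (1 - ρ) := by push_cast; linarith

variable [Fintype α] [Nonempty α]

/-- Among `m + 1` exchangeable samples, the number of those whose image is not repeated is at most
the number of images. -/
lemma expect_prob_ne_le (g : α → β) (m : ℕ) :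
    𝔼 v, prob (fun u : Fin m → α ↦ ∀ i, g v ≠ g (u i)) ≤ #(univ.image g) / (m + 1) := by
  classical
  let isolated (i : Fin (m + 1)) (w : Fin (m + 1) → α) : Prop := ∀ j ≠ i, g (w i) ≠ g (w j)
  have exchange (i : Fin (m + 1)) : prob (isolated i) = prob (isolated 0) := by
    rw [← prob_equiv ((Equiv.swap 0 i).arrowCongr (Equiv.refl α)) (isolated 0)]
    congr! 2 with w
    refine (Equiv.swap 0 i).forall_congr fun j ↦ ?_
    simp [Equiv.swap_apply_eq_iff]
  have count (w : Fin (m + 1) → α) : #{i | isolated i w} ≤ #(univ.image g) := by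
    refine card_le_card_of_injOn (fun i ↦ g (w i))
      (fun i _ ↦ mem_coe.2 (mem_image_of_mem g (mem_univ (w i)))) fun i hi j _ hij ↦ ?_
    contrapose! hij
    exact (mem_filter.1 hi).2 j hij.symm
  rw [le_div_iff₀ (by positivity)]
  calc (𝔼 v, prob fun u : Fin m → α ↦ ∀ i, g v ≠ g (u i)) * (m + 1)
      = prob (isolated 0) * (m + 1) := by
        rw [← prob_equiv (Fin.consEquiv fun _ ↦ α) (isolated 0), prob_eq_expect, expect_prod]
        simp [isolated, prob_eq_expect, Fin.forall_fin_succ]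
    _ = ∑ i : Fin (m + 1), prob (isolated i) := by simp [exchange, mul_comm]
    _ = 𝔼 w, (#{i | isolated i w} : ℝ) := by
        simp_rw [natCast_card_filter, expect_sum_comm, prob_eq_expect]
    _ ≤ #(univ.image g) := expect_le univ_nonempty fun w _ ↦ Nat.cast_le.2 (count w)

end Images

section Flow

variable {R : Type*} [Semiring R]

/-- One time slice of the butterfly over `R`: `x` moves to `2x` or `2x + 1`, as its bit says. -/
def layer (ω : R → Bool) (x : R) : R := 2 * x + if ω x then 1 else 0

/-- The position after `t` steps of the path that starts at `x` and crosses the layers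
`σ 0, σ 1, …`. -/
def path (σ : ℕ → R → Bool) (x : R) : ℕ → R
  | 0 => x
  | t + 1 => layer (σ t) (path σ x t)

/-- The path of a walker that carries its own sequence of bits. -/
def walk (b : ℕ → Bool) (x : R) (t : ℕ) : R := path (fun s _ ↦ b s) x t

/-- The extension of a finite sequence to `ℕ`, by default values. -/
def pad {α : Type*} [Inhabited α] {n : ℕ} (σ : Fin n → α) (t : ℕ) : α :=
  if h : t < n then σ ⟨t, h⟩ else default

/-- The composition of the layers `σ 0, …, σ (n - 1)`. -/
def flow {n : ℕ} (σ : Fin n → R → Bool) (x : R) : R := path (pad σ) x n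

lemma path_congr {σ τ : ℕ → R → Bool} (x : R) {t : ℕ} (h : ∀ s < t, σ s = τ s) :
    path σ x t = path τ x t := by
  induction t with
  | zero => rfl
  | succ t ih => simp only [path, ih fun s hs ↦ h s (hs.trans t.lt_succ_self), h t t.lt_succ_self]

lemma path_add (σ : ℕ → R → Bool) (x : R) (s t : ℕ) :
    path σ x (s + t) = path (fun i ↦ σ (s + i)) (path σ x s) t := by
  induction t with
  | zero => rfl
  | succ t ih => exact congrArg (layer (σ (s + t))) ih

lemma walk_succ (b : ℕ → Bool) (x : R) (t : ℕ) :
    walk b x (t + 1) = 2 * walk b x t + if b t then 1 else 0 := rfl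

lemma walk_add (b : ℕ → Bool) (x : R) (s t : ℕ) :
    walk b x (s + t) = walk (fun i ↦ b (s + i)) (walk b x s) t :=
  path_add _ x s t

lemma walk_congr {a b : ℕ → Bool} (x : R) {t : ℕ} (h : ∀ s < t, a s = b s) :
    walk a x t = walk b x t :=
  path_congr x fun s hs ↦ funext fun _ ↦ h s hs

lemma walk_eq_two_pow_mul_add (b : ℕ → Bool) (x : R) (t : ℕ) :
    walk b x t = 2 ^ t * x + (walk b (0 : ℕ) t : ℕ) := by
  induction t with
  | zero => simp [walk, path]
  | succ t ih =>
    rw [walk_succ, ih, walk_succ]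
    push_cast
    rw [mul_add, ← mul_assoc, ← pow_succ', add_assoc]

lemma walk_zero_lt_two_pow (b : ℕ → Bool) (t : ℕ) : walk b (0 : ℕ) t < 2 ^ t := by
  induction t with
  | zero => simp [walk, path]
  | succ t ih => rw [walk_succ, pow_succ]; split_ifs <;> lia

lemma eq_of_walk_zero_eq {a b : ℕ → Bool} {t : ℕ} (h : walk a (0 : ℕ) t = walk b 0 t) :
    ∀ s < t, a s = b s := by
  induction t with
  | zero => simp
  | succ t ih =>
    have last : a t = b t := by
      cases ha : a t <;> cases hb : b t <;> simp [walk_succ, ha, hb] at h ⊢ <;> lia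
    have earlier : walk a (0 : ℕ) t = walk b 0 t := by
      simpa [walk_succ, last] using h
    intro s hs
    rcases Nat.lt_succ_iff_lt_or_eq.1 hs with hs | rfl
    exacts [ih earlier s hs, last]

lemma pad_of_lt {α : Type*} [Inhabited α] {n t : ℕ} (σ : Fin n → α) (h : t < n) :
    pad σ t = σ ⟨t, h⟩ := dif_pos h

lemma pad_snoc_of_lt {α : Type*} [Inhabited α] {n t : ℕ} (σ : Fin n → α) (a : α) (h : t < n) :
    pad (Fin.snoc σ a : Fin (n + 1) → α) t = pad σ t := by
  simp [pad, h, h.trans n.lt_succ_self, Fin.snoc]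

lemma pad_snoc_self {α : Type*} [Inhabited α] {n : ℕ} (σ : Fin n → α) (a : α) :
    pad (Fin.snoc σ a : Fin (n + 1) → α) n = a := by
  simp [pad, Fin.snoc]

lemma flow_snoc {n : ℕ} (σ : Fin n → R → Bool) (ω : R → Bool) :
    flow (Fin.snoc σ ω : Fin (n + 1) → R → Bool) = layer ω ∘ flow σ := by
  funext x
  simp only [flow, path, pad_snoc_self, comp_apply,
    path_congr x fun _ hs ↦ pad_snoc_of_lt σ ω hs]

lemma flow_append {a b : ℕ} (σ : Fin a → R → Bool) (τ : Fin b → R → Bool) :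
    flow (Fin.append σ τ) = flow τ ∘ flow σ := by
  funext x
  have left : path (pad (Fin.append σ τ)) x a = flow σ x := path_congr x fun s hs ↦ by
    rw [pad_of_lt _ hs, pad_of_lt _ (hs.trans_le (a.le_add_right b))]
    exact Fin.append_left σ τ ⟨s, hs⟩
  rw [flow, path_add, left]
  refine path_congr _ fun s hs ↦ ?_
  rw [pad_of_lt _ hs, pad_of_lt _ (Nat.add_lt_add_left hs a)]
  exact Fin.append_right σ τ ⟨s, hs⟩

lemma walk_pad_snoc {n t : ℕ} (b : Fin n → Bool) (c : Bool) (x : R) (ht : t ≤ n) :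
    walk (pad (Fin.snoc b c : Fin (n + 1) → Bool)) x t = walk (pad b) x t :=
  walk_congr x fun _ hs ↦ pad_snoc_of_lt b c (hs.trans_le ht)

variable [Fintype R] [DecidableEq R]

lemma expect_flow_add {a b N : ℕ} (h : a + b = N) (Φ : (R → R) → ℝ) :
    𝔼 σ : Fin N → R → Bool, Φ (flow σ) =
      𝔼 σ : Fin a → R → Bool, 𝔼 τ : Fin b → R → Bool, Φ (flow τ ∘ flow σ) := by
  subst h
  rw [← expect_prod fun x : (Fin a → R → Bool) × (Fin b → R → Bool) ↦ Φ (flow x.2 ∘ flow x.1)]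
  exact (Fintype.expect_equiv (Fin.appendEquiv a b) _ _
    fun x ↦ congrArg Φ (flow_append x.1 x.2).symm).symm

lemma prob_flow_le_mul {a b N : ℕ} (h : a + b = N) {p q : (R → R) → Prop}
    (hpq : ∀ f g, p (g ∘ f) → q f) {c : ℝ}
    (hc : ∀ f, prob (fun τ : Fin b → R → Bool ↦ p (flow τ ∘ f)) ≤ c) :
    prob (fun σ : Fin N → R → Bool ↦ p (flow σ)) ≤
      c * prob (fun σ : Fin a → R → Bool ↦ q (flow σ)) := by
  classical
  simp only [prob_eq_expect]
  rw [expect_flow_add h fun f ↦ if p f then 1 else 0, mul_expect]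
  refine expect_le_expect fun σ _ ↦ ?_
  rw [mul_boole, ← prob_eq_expect]
  split_ifs with hq
  · exact hc (flow σ)
  · simp [mt (hpq (flow σ) _) hq, prob]

lemma prob_snoc {α : Type*} [Fintype α] {n : ℕ} (p : (Fin (n + 1) → α) → Prop) :
    prob p = 𝔼 a, prob fun s : Fin n → α ↦ p (Fin.snoc s a) :=
  (prob_equiv (Fin.snocEquiv fun _ ↦ α) p).symm.trans (expect_prod _)

lemma prob_pi_snoc {α ι : Type*} [Fintype α] [Fintype ι] [DecidableEq ι] {n : ℕ}
    (p : (ι → Fin (n + 1) → α) → Prop) :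
    prob p = 𝔼 a : ι → α, prob fun s : ι → Fin n → α ↦ p fun i ↦ Fin.snoc (s i) (a i) :=
  (prob_equiv ((Equiv.arrowProdEquivProdArrow ι _ _).symm.trans
    ((Equiv.refl ι).arrowCongr (Fin.snocEquiv fun _ ↦ α))) p).symm.trans (expect_prod _)

lemma prob_layer_comp {ι : Type*} [Fintype ι] [DecidableEq ι] (y : ι → R) {p : (ι → R) → Prop}
    (hp : ∀ z, p z → Injective z) :
    prob (fun ω : R → Bool ↦ p (layer ω ∘ y)) =
      prob fun c : ι → Bool ↦ Injective y ∧ p fun i ↦ 2 * y i + if c i then 1 else 0 := by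
  by_cases hy : Injective y
  · simp only [hy, true_and]
    exact prob_comp_injective hy fun c : ι → Bool ↦ p fun i ↦ 2 * y i + if c i then 1 else 0
  · have not_p (ω : R → Bool) : ¬p (layer ω ∘ y) := fun h ↦ hy (hp _ h).of_comp
    simp [hy, not_p, prob]

/-- As long as the walkers have not met, they read different input bits, so that they move as if
each had its own independent bits. -/
lemma prob_flow_comp {ι : Type*} [Fintype ι] [DecidableEq ι] (n : ℕ) (x : ι → R)
    {p : (ι → R) → Prop} (hp : ∀ z, p z → Injective z) :
    prob (fun σ : Fin n → R → Bool ↦ p (flow σ ∘ x)) =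
      prob (fun b : ι → Fin n → Bool ↦
        (∀ t ≤ n, Injective fun i ↦ walk (pad (b i)) (x i) t) ∧
          p fun i ↦ walk (pad (b i)) (x i) n) := by
  induction n generalizing p with
  | zero =>
    have h : p x ↔ Injective x ∧ p x := ⟨fun h ↦ ⟨hp x h, h⟩, And.right⟩
    classical
    simpa [flow, walk, path, prob_eq_expect, comp_def] using if_congr h rfl rfl
  | succ n ih =>
    let q (c : ι → Bool) (y : ι → R) : Prop :=
      Injective y ∧ p fun i ↦ 2 * y i + if c i then 1 else 0
    calc prob (fun σ : Fin (n + 1) → R → Bool ↦ p (flow σ ∘ x))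
        = 𝔼 σ : Fin n → R → Bool, prob fun ω : R → Bool ↦ p (layer ω ∘ flow σ ∘ x) := by
          rw [prob_snoc, expect_prob_comm]
          simp only [flow_snoc, comp_assoc]
      _ = 𝔼 c, prob fun σ : Fin n → R → Bool ↦ q c (flow σ ∘ x) := by
          rw [expect_prob_comm fun c σ ↦ q c (flow σ ∘ x)]
          exact expect_congr rfl fun σ _ ↦ prob_layer_comp (flow σ ∘ x) hp
      _ = 𝔼 c, prob fun b : ι → Fin n → Bool ↦
            (∀ t ≤ n, Injective fun i ↦ walk (pad (b i)) (x i) t) ∧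
              q c fun i ↦ walk (pad (b i)) (x i) n :=
          expect_congr rfl fun c _ ↦ ih (p := q c) fun _ hz ↦ hz.1
      _ = _ := by
          rw [prob_pi_snoc]
          refine expect_congr rfl fun c _ ↦ ?_
          congr! 2 with b
          simp +contextual only [q, Nat.le_succ_iff, walk_succ, pad_snoc_self, walk_pad_snoc,
            or_imp, forall_and, forall_eq, le_rfl]
          exact ⟨fun h ↦ ⟨⟨h.1, hp _ h.2.2⟩, h.2.2⟩, fun h ↦ ⟨h.1.1, h.1.1 n le_rfl, h.2⟩⟩

end Flow

section Walkers

variable {d : ℕ}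

lemma walk_add_eq_cast (b : ℕ → Bool) (x : ZMod (2 ^ d)) (s : ℕ) :
    walk b x (s + d) = (walk (fun i ↦ b (s + i)) (0 : ℕ) d : ℕ) := by
  have two_pow : (2 : ZMod (2 ^ d)) ^ d = 0 := mod_cast ZMod.natCast_self (2 ^ d)
  rw [walk_add, walk_eq_two_pow_mul_add, two_pow, zero_mul, zero_add]

lemma walk_add_eq_walk_add {a b : ℕ → Bool} (x y : ZMod (2 ^ d)) {s : ℕ}
    (h : ∀ i < d, a (s + i) = b (s + i)) : walk a x (s + d) = walk b y (s + d) := by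
  rw [walk_add_eq_cast, walk_add_eq_cast, walk_congr 0 h]

lemma walk_pad_injective (x : ZMod (2 ^ d)) :
    Injective fun b : Fin d → Bool ↦ walk (pad b) x d := by
  intro a b h
  have last (c : Fin d → Bool) : walk (pad c) x d = (walk (pad c) (0 : ℕ) d : ℕ) := by
    simpa using walk_add_eq_cast (pad c) x 0
  simp only [last, ZMod.natCast_eq_natCast_iff] at h
  have hN := h.eq_of_lt_of_lt (walk_zero_lt_two_pow _ _) (walk_zero_lt_two_pow _ _)
  funext i
  simpa [pad_of_lt] using eq_of_walk_zero_eq hN i i.is_lt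

lemma prob_flow_comp_eq_le {k : ℕ} (x : Fin k → ZMod (2 ^ d)) {y : Fin k → ZMod (2 ^ d)}
    (hy : Injective y) :
    prob (fun σ : Fin d → ZMod (2 ^ d) → Bool ↦ flow σ ∘ x = y) ≤ (((2 : ℝ) ^ d) ^ k)⁻¹ := by
  rw [prob_flow_comp (p := (· = y)) d x fun z hz ↦ hz ▸ hy]
  refine (prob_le_of_subsingleton fun a b ha hb ↦ ?_).trans_eq (by simp)
  funext i
  exact walk_pad_injective (x i) ((congrFun ha.2 i).trans (congrFun hb.2 i).symm)

/-- Two walkers whose bits differ at time `s` and agree at the next `d` times; they stand at the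
same vertex right after. -/
def MeetAt (s : Fin d) (a b : Fin (d + d) → Bool) : Prop :=
  a (s.castAdd d) ≠ b (s.castAdd d) ∧ ∀ t ∈ Ioc (s.castAdd d) (s.natAdd d), a t = b t

lemma MeetAt.symm {s : Fin d} {a b : Fin (d + d) → Bool} (h : MeetAt s a b) : MeetAt s b a :=
  ⟨h.1.symm, fun t ht ↦ (h.2 t ht).symm⟩

lemma MeetAt.le {s s' : Fin d} {a b : Fin (d + d) → Bool} (h : MeetAt s a b)
    (h' : MeetAt s' a b) : s' ≤ s := by
  by_contra! hlt
  refine h'.1 (h.2 _ (mem_Ioc.2 ⟨hlt, ?_⟩))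
  simp only [Fin.le_def, Fin.val_castAdd, Fin.val_natAdd]
  lia

lemma MeetAt.walk_eq {s : Fin d} {a b : Fin (d + d) → Bool} (h : MeetAt s a b)
    (x y : ZMod (2 ^ d)) : walk (pad a) x (s + 1 + d) = walk (pad b) y (s + 1 + d) := by
  refine walk_add_eq_walk_add x y fun i hi ↦ ?_
  have hlt : s + 1 + i < d + d := by lia
  rw [pad_of_lt a hlt, pad_of_lt b hlt]
  refine h.2 _ (mem_Ioc.2 ⟨?_, ?_⟩) <;>
    simp only [Fin.lt_def, Fin.le_def, Fin.val_castAdd, Fin.val_natAdd] <;> lia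

lemma meetAt_iff (s : Fin d) (a b : Fin (d + d) → Bool) :
    MeetAt s a b ↔ ∀ t ∈ Icc (s.castAdd d) (s.natAdd d),
      b t = update a (s.castAdd d) (!a (s.castAdd d)) t := by
  have hle : s.castAdd d ≤ s.natAdd d := by
    simp only [Fin.le_def, Fin.val_castAdd, Fin.val_natAdd]; lia
  rw [← Ioc_insert_left hle, forall_mem_insert]
  refine and_congr (by simp [Bool.eq_not, eq_comm]) (forall₂_congr fun t ht ↦ ?_)
  rw [update_of_ne (mem_Ioc.1 ht).1.ne', eq_comm]

lemma prob_meetAt (s : Fin d) (a : Fin (d + d) → Bool) :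
    prob (MeetAt s a) = ((2 : ℝ) ^ (d + 1))⁻¹ := by
  have card_Icc : #(Icc (s.castAdd d) (s.natAdd d)) = d + 1 := by
    simp only [Fin.card_Icc, Fin.val_castAdd, Fin.val_natAdd]; lia
  calc prob (MeetAt s a) = prob fun b : Fin (d + d) → Bool ↦
          ∀ t ∈ Icc (s.castAdd d) (s.natAdd d),
            b t = update a (s.castAdd d) (!a (s.castAdd d)) t := by simp only [← meetAt_iff]
    _ = ((2 : ℝ) ^ (d + 1))⁻¹ := by
        rw [prob_forall_mem_eq, card_Icc, Fintype.card_bool, Nat.cast_two]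

lemma prob_exists_meetAt (a : Fin (d + d) → Bool) :
    prob (fun b ↦ ∃ s, MeetAt s a b) = d / 2 ^ (d + 1) := by
  have disjoint (b : Fin (d + d) → Bool) :
      ∀ s ∈ univ, ∀ s' ∈ univ, MeetAt s a b → MeetAt s' a b → s = s' :=
    fun s _ s' _ h h' ↦ le_antisymm (h'.le h) (h.le h')
  simpa [prob_meetAt, div_eq_mul_inv] using prob_exists_eq_sum univ (MeetAt · a) disjoint

/-- The expected number of pairs of `k` walkers that meet in a window of `2d` steps. -/
noncomputable def meetingRate (d k : ℕ) : ℝ := k.choose 2 * (d / 2 ^ (d + 1))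

lemma prob_injective_flow_comp_le {k : ℕ} (x : Fin k → ZMod (2 ^ d)) :
    prob (fun σ : Fin (d + d) → ZMod (2 ^ d) → Bool ↦ Injective (flow σ ∘ x)) ≤
      1 / (1 + meetingRate d k) := by
  rw [prob_flow_comp (d + d) x fun z hz ↦ hz]
  have pairwise := prob_pairwise_not_le (ι := Fin k) (R := fun a b ↦ ∃ s : Fin d, MeetAt s a b)
    ⟨fun a b ⟨s, h⟩ ↦ ⟨s, h.symm⟩⟩ prob_exists_meetAt
  rw [Fintype.card_fin] at pairwise
  refine (prob_mono fun b hb i j hij ↦ ?_).trans pairwise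
  rintro ⟨s, h⟩
  exact hij (hb.1 (s + 1 + d) (by lia) (h.walk_eq (x i) (x j)))

lemma meetingRate_nonneg (d k : ℕ) : 0 ≤ meetingRate d k := by unfold meetingRate; positivity

end Walkers

section Windows

variable {d : ℕ}

lemma meetingRate_succ (d κ : ℕ) : meetingRate d (κ + 1) = κ * (κ + 1) / 4 * (d / 2 ^ d) := by
  rw [meetingRate, Nat.cast_choose_two, pow_succ]
  push_cast
  field

lemma prob_injective_flow_windows_le {k : ℕ} (x : Fin k → ZMod (2 ^ d)) (J : ℕ) :
    prob (fun σ : Fin (J * (d + d)) → ZMod (2 ^ d) → Bool ↦ Injective (flow σ ∘ x)) ≤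
      1 / (1 + J * meetingRate d k) := by
  have rate_nonneg := meetingRate_nonneg d k
  have power : prob (fun σ : Fin (J * (d + d)) → ZMod (2 ^ d) → Bool ↦ Injective (flow σ ∘ x)) ≤
      (1 / (1 + meetingRate d k)) ^ J := by
    induction J with
    | zero => exact prob_le_one _
    | succ J ih =>
      rw [pow_succ']
      refine (prob_flow_le_mul (p := fun f ↦ Injective (f ∘ x)) (q := fun f ↦ Injective (f ∘ x))
        (J.succ_mul (d + d)).symm (fun f g h ↦ Injective.of_comp (f := g) h)
        fun f ↦ prob_injective_flow_comp_le (f ∘ x)).trans ?_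
      gcongr
  refine power.trans ?_
  rw [div_pow, one_pow]
  gcongr
  exact one_add_mul_le_pow (by linarith) J

lemma expect_card_image_window_le (κ : ℕ) (hκ : meetingRate d (κ + 1) ≤ 1)
    (s : Finset (ZMod (2 ^ d))) :
    𝔼 σ : Fin (d + d) → ZMod (2 ^ d) → Bool, (#(s.image (flow σ)) : ℝ) ≤
      #s - κ / 8 * (d / 2 ^ d) * (#s - κ) := by
  have rate_nonneg := meetingRate_nonneg d (κ + 1)
  have injOn_le (t : Finset (ZMod (2 ^ d))) (ht : #t = κ + 1) :
      prob (fun σ : Fin (d + d) → ZMod (2 ^ d) → Bool ↦ Set.InjOn (flow σ) t) ≤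
        1 / (1 + meetingRate d (κ + 1)) := by
    refine (prob_mono fun σ hσ ↦ ?_).trans
      (prob_injective_flow_comp_le fun i ↦ ((t.equivFinOfCardEq ht).symm i : ZMod (2 ^ d)))
    exact hσ.injective.comp (t.equivFinOfCardEq ht).symm.injective
  have collision : meetingRate d (κ + 1) / 2 ≤ 1 - 1 / (1 + meetingRate d (κ + 1)) := by
    rw [le_sub_iff_add_le', ← le_sub_iff_add_le, div_le_iff₀ (by positivity)]
    nlinarith
  have blocks : (#s : ℝ) - κ ≤ (#s / (κ + 1) : ℕ) * (κ + 1) := by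
    have := Nat.lt_div_mul_add (a := #s) κ.succ_pos
    rw [sub_le_iff_le_add]
    exact_mod_cast (by lia : #s ≤ #s / (κ + 1) * (κ + 1) + κ)
  calc 𝔼 σ : Fin (d + d) → ZMod (2 ^ d) → Bool, (#(s.image (flow σ)) : ℝ)
      ≤ #s - (#s / (κ + 1) : ℕ) * (1 - 1 / (1 + meetingRate d (κ + 1))) :=
        expect_card_image_le flow injOn_le _ s (Nat.div_mul_le_self _ _)
    _ ≤ #s - (#s / (κ + 1) : ℕ) * (meetingRate d (κ + 1) / 2) := by gcongr
    _ = #s - κ / 8 * (d / 2 ^ d) * ((#s / (κ + 1) : ℕ) * (κ + 1)) := by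
        rw [meetingRate_succ]; ring
    _ ≤ #s - κ / 8 * (d / 2 ^ d) * (#s - κ) := by gcongr

/-- The expected number of vertices of a slice that the flow reaches after `n` layers. -/
noncomputable def meanRange (d n : ℕ) : ℝ :=
  𝔼 σ : Fin n → ZMod (2 ^ d) → Bool, (#(univ.image (flow σ)) : ℝ)

lemma meanRange_le_two_pow (d n : ℕ) : meanRange d n ≤ 2 ^ d :=
  expect_le univ_nonempty fun σ _ ↦ by
    have := card_le_univ (univ.image (flow σ))
    rw [ZMod.card] at this
    exact_mod_cast this

lemma meanRange_nonneg (d n : ℕ) : 0 ≤ meanRange d n := expect_nonneg fun _ _ ↦ Nat.cast_nonneg _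

lemma meanRange_add (a b : ℕ) :
    meanRange d (a + b) = 𝔼 σ : Fin a → ZMod (2 ^ d) → Bool,
      𝔼 τ : Fin b → ZMod (2 ^ d) → Bool, (#((univ.image (flow σ)).image (flow τ)) : ℝ) := by
  simp only [image_image]
  exact expect_flow_add rfl fun f ↦ (#(univ.image f) : ℝ)

lemma meanRange_add_le (a b : ℕ) : meanRange d (a + b) ≤ meanRange d a := by
  rw [meanRange_add]
  exact expect_le_expect fun σ _ ↦
    expect_le univ_nonempty fun τ _ ↦ Nat.cast_le.2 card_image_le

lemma meanRange_add_window_le (n κ : ℕ) (hκ : meetingRate d (κ + 1) ≤ 1) :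
    meanRange d (n + (d + d)) ≤
      meanRange d n - κ / 8 * (d / 2 ^ d) * (meanRange d n - κ) := by
  rw [meanRange_add]
  refine (expect_le_expect fun σ _ ↦ expect_card_image_window_le κ hκ _).trans_eq ?_
  rw [expect_sub_distrib, ← mul_expect, expect_sub_distrib, Fintype.expect_const, meanRange]

lemma cube_mul_one_sub_le {δ r : ℝ} (hδ : 0 ≤ δ) (hr : 0 ≤ r) :
    r ^ 3 * (1 - δ * r / 16) ≤ (r / (1 + δ * r / 48)) ^ 3 := by
  have hz : 0 ≤ δ * r / 48 := by positivity
  generalize hzdef : δ * r / 48 = z at *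
  have h16 : δ * r / 16 = 3 * z := by rw [← hzdef]; ring
  have cubic : (1 - 3 * z) * (1 + z) ^ 3 ≤ 1 := by nlinarith [pow_nonneg hz 3, pow_nonneg hz 4]
  rw [h16, div_pow, le_div_iff₀ (by positivity), mul_assoc]
  exact mul_le_of_le_one_right (by positivity) cubic

/-- With `δ = d / 2 ^ d`, a range of about `r ^ 3`, cut into blocks of about `r` walkers, loses
about `δ * r ^ 4 / 16` in a window. This is the recursion `r' = -δ * r ^ 2 / 48`, whose solutions
come down from infinity. -/
lemma meanRange_windows_step {n : ℕ} {r : ℝ} (hr : 0 < r) (hd : 0 < d)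
    (hrate : (r + 1) * (r + 2) * (d / 2 ^ d) ≤ 4) (hn : meanRange d n ≤ 2 + r ^ 3) :
    meanRange d (n + (d + d)) ≤ 2 + (r / (1 + d / 2 ^ d * r / 48)) ^ 3 := by
  set δ : ℝ := d / 2 ^ d
  have hδ : 0 < δ := by positivity
  set κ := ⌈r⌉₊
  have r_le_κ : r ≤ κ := Nat.le_ceil r
  have κ_le : (κ : ℝ) ≤ r + 1 := (Nat.ceil_lt_add_one hr.le).le
  have rate_le_one : meetingRate d (κ + 1) ≤ 1 := by
    rw [meetingRate_succ]
    have : κ * (κ + 1 : ℝ) * δ ≤ (r + 1) * (r + 2) * δ := by gcongr ?_ * ?_ * _; linarith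
    linarith
  have contraction : 0 ≤ 1 - κ / 8 * δ := by
    have : κ * δ ≤ (r + 1) * δ := by gcongr
    nlinarith [mul_nonneg hr.le (by positivity : 0 ≤ (r + 1) * δ)]
  have half : r ^ 3 / 2 ≤ r ^ 3 + 2 - κ := by nlinarith [sq_nonneg (r - 1)]
  calc meanRange d (n + (d + d)) ≤ meanRange d n - κ / 8 * δ * (meanRange d n - κ) :=
        meanRange_add_window_le n κ rate_le_one
    _ = (1 - κ / 8 * δ) * meanRange d n + κ / 8 * δ * κ := by ring
    _ ≤ (1 - κ / 8 * δ) * (2 + r ^ 3) + κ / 8 * δ * κ := by gcongr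
    _ = 2 + r ^ 3 - κ / 8 * δ * (r ^ 3 + 2 - κ) := by ring
    _ ≤ 2 + r ^ 3 - r / 8 * δ * (r ^ 3 / 2) := by gcongr
    _ = 2 + r ^ 3 * (1 - δ * r / 16) := by ring
    _ ≤ _ := by gcongr; exact cube_mul_one_sub_le hδ.le hr.le

lemma meanRange_windows_le {r : ℝ} (hr : 0 < r) (hd : 0 < d) (hr3 : 2 ^ d ≤ r ^ 3)
    (hrate : (r + 1) * (r + 2) * (d / 2 ^ d) ≤ 4) (j : ℕ) :
    meanRange d (j * (d + d)) ≤ 2 + (r / (1 + d / 2 ^ d * r / 48 * j)) ^ 3 := by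
  induction j with
  | zero =>
    simpa using (meanRange_le_two_pow d _).trans (hr3.trans (by linarith))
  | succ j ih =>
    set δ : ℝ := d / 2 ^ d with hδdef
    rw [Nat.succ_mul]
    refine (meanRange_windows_step (by positivity) hd ?_ ih).trans_eq ?_
    · have decreasing : r / (1 + δ * r / 48 * j) ≤ r :=
        div_le_self hr.le (le_add_of_nonneg_right (by positivity))
      exact le_trans (by gcongr) hrate
    · rw [← hδdef]
      congr 2
      push_cast
      field

end Windows

section Parameters

variable {d J : ℕ}

lemma sum_range_one_div_le (n : ℕ) :
    ∑ k ∈ range n, 1 / (1 + k * (k + 1) / 64 : ℝ) ≤ 129 - 128 / (n + 1) := by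
  induction n with
  | zero => norm_num
  | succ n ih =>
    have telescope : 1 / (1 + n * (n + 1) / 64 : ℝ) ≤ 128 / (n + 1) - 128 / (n + 1 + 1) := by
      rw [div_sub_div _ _ (by positivity) (by positivity),
        div_le_div_iff₀ (by positivity) (by positivity)]
      nlinarith [sq_nonneg (n - 1 : ℝ)]
    rw [sum_range_succ]
    push_cast
    linarith

lemma sum_range_one_div_meetingRate_le (hJ : 1 / 16 ≤ (J : ℝ) * (d / 2 ^ d)) (n : ℕ) :
    ∑ k ∈ range n, 1 / (1 + J * meetingRate d (k + 1)) ≤ 129 :=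
  calc ∑ k ∈ range n, 1 / (1 + J * meetingRate d (k + 1))
      ≤ ∑ k ∈ range n, 1 / (1 + k * (k + 1) / 64 : ℝ) := by
        gcongr with k
        rw [meetingRate_succ]
        nlinarith [mul_le_mul_of_nonneg_left hJ (by positivity : 0 ≤ (k * (k + 1) / 4 : ℝ))]
    _ ≤ 129 - 128 / (n + 1) := sum_range_one_div_le n
    _ ≤ 129 := sub_le_self _ (by positivity)

lemma pow_three_le_two_pow (hd : 10 ≤ d) : d ^ 3 ≤ 2 ^ d := by
  induction d, hd using Nat.le_induction with
  | base => norm_num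
  | succ d hd ih =>
    have growth : (d + 1) ^ 3 ≤ d ^ 3 * 2 := by
      obtain ⟨e, rfl⟩ := Nat.exists_eq_add_of_le hd
      nlinarith [Nat.zero_le (e ^ 2), Nat.zero_le (e ^ 3)]
    exact growth.trans ((Nat.mul_le_mul_right 2 ih).trans_eq (pow_succ 2 d).symm)

lemma meanRange_le (hd : 10 ≤ d) (hJ : 1 / 16 ≤ (J : ℝ) * (d / 2 ^ d)) {n : ℕ}
    (hn : J * (d + d) ≤ n) : meanRange d n ≤ 2 + 768 ^ 3 := by
  have hd' : (10 : ℝ) ≤ d := mod_cast hd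
  have cube_le : (d : ℝ) ^ 3 ≤ 2 ^ d := mod_cast pow_three_le_two_pow hd
  have d_le_sq : (d : ℝ) ^ 2 ≤ 2 ^ d / d := by
    rw [le_div_iff₀ (by positivity)]; linarith
  set r := √(2 ^ d / d)
  have r_sq : r ^ 2 = 2 ^ d / d := Real.sq_sqrt (by positivity)
  have d_le_r : d ≤ r := Real.le_sqrt_of_sq_le d_le_sq
  have r_pos : 0 < r := by positivity
  have rate_eq : (d / 2 ^ d : ℝ) = 1 / r ^ 2 := by rw [r_sq, one_div_div]
  have starts_above : (2 : ℝ) ^ d ≤ r ^ 3 := by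
    have : (2 : ℝ) ^ d = d * r ^ 2 := by rw [r_sq]; field
    rw [this, pow_succ' r 2]
    gcongr
  have rate_le : (r + 1) * (r + 2) * (d / 2 ^ d) ≤ 4 := by
    rw [rate_eq, mul_one_div, div_le_iff₀ (by positivity)]
    nlinarith
  obtain ⟨l, rfl⟩ := Nat.exists_eq_add_of_le hn
  calc meanRange d (J * (d + d) + l) ≤ meanRange d (J * (d + d)) := meanRange_add_le _ _
    _ ≤ 2 + (r / (1 + d / 2 ^ d * r / 48 * J)) ^ 3 :=
        meanRange_windows_le r_pos (by lia) starts_above rate_le J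
    _ ≤ 2 + 768 ^ 3 := by
        gcongr
        rw [div_le_iff₀ (by positivity)]
        nlinarith

lemma exists_window_parameters (d : ℕ) : ∃ J n : ℕ, n + (J * (d + d) + d) = 2 ^ d ∧
    meanRange d n ≤ 2 + 768 ^ 3 ∧
    ∑ k ∈ range (2 ^ d), 1 / (1 + J * meetingRate d (k + 1)) ≤ 512 := by
  rcases le_or_gt 10 d with hd | hd
  · have eight_mul_le : 8 * d ≤ 2 ^ d := by
      refine le_trans ?_ (pow_three_le_two_pow hd)
      rw [pow_succ]
      gcongr
      nlinarith
    obtain ⟨J, hJ⟩ : ∃ J, J = 2 ^ d / (8 * d) := ⟨_, rfl⟩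
    have upper : 8 * (J * d) ≤ 2 ^ d := by
      have := Nat.div_mul_le_self (2 ^ d) (8 * d)
      rw [← hJ] at this; linarith
    have lower : 2 ^ d ≤ 16 * (J * d) := by
      have J_pos : 1 ≤ J := hJ ▸ Nat.div_pos eight_mul_le (by lia)
      have := Nat.lt_mul_div_succ (2 ^ d) (by lia : 0 < 8 * d)
      rw [← hJ] at this
      nlinarith
    have many : 1 / 16 ≤ (J : ℝ) * (d / 2 ^ d) := by
      rw [mul_div_assoc', div_le_div_iff₀ (by norm_num) (by positivity)]
      exact_mod_cast (by lia : 1 * 2 ^ d ≤ J * d * 16)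
    refine ⟨J, 2 ^ d - (J * (d + d) + d), ?_, meanRange_le hd many ?_,
      (sum_range_one_div_meetingRate_le many _).trans (by norm_num)⟩ <;>
    · rw [mul_add]; lia
  · have two_pow_le : (2 : ℝ) ^ d ≤ 512 := by
      calc (2 : ℝ) ^ d ≤ 2 ^ 9 := by gcongr; exacts [one_le_two, by lia]
        _ = 512 := by norm_num
    refine ⟨0, 2 ^ d - d, ?_, ?_, by simpa using two_pow_le⟩
    · have := d.lt_two_pow_self
      lia
    · exact (meanRange_le_two_pow d _).trans (two_pow_le.trans (by norm_num))

end Parameters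

section Cycles

/-- A directed cycle of `f` with vertices `v 0, …, v k`, whose vertex `v 1` is not of the form
`f (u i)`. -/
def IsAvoidingCycle {α ι : Type*} {k : ℕ} (f : α → α) (u : ι → α) (v : Fin (k + 1) → α) : Prop :=
  Injective v ∧ (∀ i, f (v i) = v (i + 1)) ∧ ∀ i, f (v 0) ≠ f (u i)

lemma isAvoidingCycle_iterate {α ι : Type*} {k : ℕ} {f : α → α} {u : ι → α} {a : α}
    (hk : minimalPeriod f a = k + 1) (hu : ∀ i, f a ≠ f (u i)) :
    IsAvoidingCycle f u fun i : Fin (k + 1) ↦ f^[i] a := by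
  refine ⟨fun i j hij ↦ Fin.ext ?_, fun i ↦ ?_, hu⟩
  · exact (iterate_eq_iterate_iff_of_lt_minimalPeriod (i.is_lt.trans_eq hk.symm)
      (j.is_lt.trans_eq hk.symm)).1 hij
  · dsimp only
    rw [← iterate_succ_apply' f, Fin.val_add, Fin.val_one', Nat.add_mod_mod,
      ← iterate_mod_minimalPeriod_eq, hk]

lemma natCard_periodicPts_le_sum {α ι : Type*} [Fintype α] (f : α → α) (u : ι → α) :
    Nat.card {a // a ∈ periodicPts f ∧ ∀ i, f a ≠ f (u i)} ≤
      ∑ k ∈ range (Fintype.card α),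
        Nat.card {v : Fin (k + 1) → α // IsAvoidingCycle f u v} := by
  have cycle (a : {a // a ∈ periodicPts f ∧ ∀ i, f a ≠ f (u i)}) :
      ∃ k < Fintype.card α, IsAvoidingCycle f u fun i : Fin (k + 1) ↦ f^[i] a := by
    obtain ⟨k, hk⟩ := Nat.exists_eq_succ_of_ne_zero (minimalPeriod_pos_of_mem_periodicPts a.2.1).ne'
    exact ⟨k, hk.symm.trans_le minimalPeriod_le_card, isAvoidingCycle_iterate hk a.2.2⟩
  choose k hk hcycle using cycle
  rw [sum_range, ← Nat.card_sigma]
  exact Nat.card_le_card_of_injective (fun a ↦ ⟨⟨k a, hk a⟩, _, hcycle a⟩)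
    (Injective.of_comp (f := fun x ↦ x.2.1 0) Subtype.val_injective)

lemma expect_natCard_eq_sum_prob {Ω α : Type*} [Fintype Ω] [Fintype α] (p : Ω → α → Prop) :
    𝔼 ω, (Nat.card {a // p ω a} : ℝ) = ∑ a, prob (fun ω ↦ p ω a) := by
  classical
  simp only [prob_eq_expect, ← expect_sum_comm, sum_boole, Nat.card_eq_fintype_card,
    Fintype.card_subtype]

variable {d k n n' N : ℕ} {ρ : ℝ}

/-- A cycle `v` is avoided only if `v 0` is not merged with a starting point in the first `n`
layers, its vertices are not merged in the next `n'` layers, and the last `d` layers, which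
bring the walkers to independent uniform vertices, send each `v i` to `v (i + 1)`. -/
lemma prob_isAvoidingCycle_le {ι : Type*} (hN : n + (n' + d) = N)
    (hρ : ∀ x : Fin (k + 1) → ZMod (2 ^ d),
      prob (fun σ : Fin n' → ZMod (2 ^ d) → Bool ↦ Injective (flow σ ∘ x)) ≤ ρ)
    (u : ι → ZMod (2 ^ d)) (v : Fin (k + 1) → ZMod (2 ^ d)) :
    prob (fun σ : Fin N → ZMod (2 ^ d) → Bool ↦ IsAvoidingCycle (flow σ) u v) ≤
      ((2 ^ d) ^ (k + 1))⁻¹ * ρ *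
        prob (fun σ : Fin n → ZMod (2 ^ d) → Bool ↦ ∀ i, flow σ (v 0) ≠ flow σ (u i)) := by
  by_cases hv : Injective v
  swap
  · have := (prob_nonneg _).trans (hρ v)
    have := prob_nonneg fun σ : Fin n → ZMod (2 ^ d) → Bool ↦ ∀ i, flow σ (v 0) ≠ flow σ (u i)
    simp only [IsAvoidingCycle, hv, false_and, prob, if_false, expect_const_zero]
    positivity
  set y : Fin (k + 1) → ZMod (2 ^ d) := fun i ↦ v (i + 1)
  have hy : Injective y := hv.comp (add_left_injective 1)
  refine prob_flow_le_mul hN (p := fun f ↦ IsAvoidingCycle f u v)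
    (q := fun f ↦ ∀ i, f (v 0) ≠ f (u i)) (fun f g h i hi ↦ h.2.2 i (congrArg g hi)) fun f ↦ ?_
  calc prob (fun τ : Fin (n' + d) → ZMod (2 ^ d) → Bool ↦ IsAvoidingCycle (flow τ ∘ f) u v)
      ≤ prob (fun τ : Fin (n' + d) → ZMod (2 ^ d) → Bool ↦ flow τ ∘ f ∘ v = y) :=
        prob_mono fun τ h ↦ funext h.2.1
    _ ≤ ((2 ^ d) ^ (k + 1))⁻¹ *
          prob (fun τ : Fin n' → ZMod (2 ^ d) → Bool ↦ Injective (flow τ ∘ f ∘ v)) :=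
        prob_flow_le_mul rfl (p := fun g ↦ g ∘ f ∘ v = y) (q := fun g ↦ Injective (g ∘ f ∘ v))
          (fun g g' h ↦ Injective.of_comp (f := g') (h ▸ hy))
          fun g ↦ prob_flow_comp_eq_le (g ∘ f ∘ v) hy
    _ ≤ ((2 ^ d) ^ (k + 1))⁻¹ * ρ := by gcongr; exact hρ _

lemma expect_natCard_isAvoidingCycle_le (hN : n + (n' + d) = N)
    (hρ : ∀ x : Fin (k + 1) → ZMod (2 ^ d),
      prob (fun σ : Fin n' → ZMod (2 ^ d) → Bool ↦ Injective (flow σ ∘ x)) ≤ ρ) (m : ℕ) :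
    𝔼 u : Fin m → ZMod (2 ^ d), 𝔼 σ : Fin N → ZMod (2 ^ d) → Bool,
        (Nat.card {v : Fin (k + 1) → ZMod (2 ^ d) // IsAvoidingCycle (flow σ) u v} : ℝ) ≤
      ρ * (meanRange d n / (m + 1)) := by
  have ρ_nonneg : 0 ≤ ρ := (prob_nonneg _).trans (hρ 0)
  let missed (u : Fin m → ZMod (2 ^ d)) (a : ZMod (2 ^ d)) : ℝ :=
    prob fun σ : Fin n → ZMod (2 ^ d) → Bool ↦ ∀ i, flow σ a ≠ flow σ (u i)
  calc 𝔼 u : Fin m → ZMod (2 ^ d), 𝔼 σ : Fin N → ZMod (2 ^ d) → Bool,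
        (Nat.card {v : Fin (k + 1) → ZMod (2 ^ d) // IsAvoidingCycle (flow σ) u v} : ℝ)
      ≤ 𝔼 u, ∑ v : Fin (k + 1) → ZMod (2 ^ d), ((2 ^ d) ^ (k + 1))⁻¹ * ρ * missed u (v 0) := by
        gcongr with u
        rw [expect_natCard_eq_sum_prob]
        gcongr with v
        exact prob_isAvoidingCycle_le hN hρ u v
    _ = ρ * 𝔼 u, 𝔼 v : Fin (k + 1) → ZMod (2 ^ d), missed u (v 0) := by
        rw [mul_expect]
        refine expect_congr rfl fun u _ ↦ ?_
        rw [Fintype.expect_eq_sum_div_card, ← mul_sum]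
        simp [ZMod.card]
        ring
    _ = ρ * 𝔼 u, 𝔼 a, missed u a := by
        rw [expect_congr rfl fun u _ ↦ expect_eval 0 (missed u)]
    _ = ρ * 𝔼 σ : Fin n → ZMod (2 ^ d) → Bool, 𝔼 a,
          prob (fun u : Fin m → ZMod (2 ^ d) ↦ ∀ i, flow σ a ≠ flow σ (u i)) := by
        rw [expect_comm, expect_congr rfl fun a _ ↦ expect_prob_comm _, expect_comm]
    _ ≤ ρ * 𝔼 σ : Fin n → ZMod (2 ^ d) → Bool, (#(univ.image (flow σ)) / (m + 1) : ℝ) := by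
        gcongr with σ
        exact expect_prob_ne_le (flow σ) m
    _ = ρ * (meanRange d n / (m + 1)) := by rw [meanRange, expect_div]

end Cycles

section ReturnMap

variable {H W : ℕ}

lemma exists_iterate_iterate_eq_iff {α : Type*} {f : α → α} {x : α} (hx : x ∈ periodicPts f)
    (n : ℕ) (y : α) : (∃ j, f^[j] (f^[n] x) = y) ↔ ∃ j, f^[j] x = y := by
  rw [← mem_periodicOrbit_iff hx, ← periodicOrbit_apply_iterate_eq hx n,
    mem_periodicOrbit_iff ((bijOn_periodicPts f).mapsTo.iterate n hx)]

/-- The first-return map of the subgraph to the slice `t`, read in the first coordinate. -/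
def returnMap (β : ZMod H × ZMod W → Bool) (t : ZMod W) (h : ZMod H) : ZMod H :=
  path (fun j x ↦ β (x, t + j)) h W

lemma bstep_iterate (β : ZMod H × ZMod W → Bool) (h : ZMod H) (t : ZMod W) (n : ℕ) :
    (bstep H W β)^[n] (h, t) = (path (fun j x ↦ β (x, t + j)) h n, t + n) := by
  induction n with
  | zero => simp [path]
  | succ n ih =>
    rw [iterate_succ_apply', ih, Nat.cast_succ, ← add_assoc]
    rfl

lemma bstep_iterate_width (β : ZMod H × ZMod W → Bool) (h : ZMod H) (t : ZMod W) :
    (bstep H W β)^[W] (h, t) = (returnMap β t h, t) := by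
  rw [bstep_iterate, ZMod.natCast_self, add_zero, returnMap]

lemma bstep_iterate_width_mul (β : ZMod H × ZMod W → Bool) (h : ZMod H) (t : ZMod W) (n : ℕ) :
    (bstep H W β)^[W * n] (h, t) = ((returnMap β t)^[n] h, t) := by
  induction n generalizing h with
  | zero => rfl
  | succ n ih =>
    rw [Nat.mul_succ, iterate_add_apply, bstep_iterate_width, ih, iterate_succ_apply]

lemma expect_returnMap [NeZero H] [NeZero W] (t : ZMod W) (Φ : (ZMod H → ZMod H) → ℝ) :
    𝔼 β : ZMod H × ZMod W → Bool, Φ (returnMap β t) =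
      𝔼 σ : Fin W → ZMod H → Bool, Φ (flow σ) := by
  let vertex (x : Fin W × ZMod H) : ZMod H × ZMod W := (x.2, t + (x.1 : ℕ))
  have vertex_injective : Injective vertex := by
    rintro ⟨i, x⟩ ⟨j, y⟩ h
    obtain ⟨hxy, hij⟩ := Prod.ext_iff.1 h
    rw [add_right_inj, ZMod.natCast_eq_natCast_iff] at hij
    exact Prod.ext (Fin.ext (hij.eq_of_lt_of_lt i.is_lt j.is_lt)) hxy
  have returnMap_eq (β : ZMod H × ZMod W → Bool) :
      returnMap β t = flow (curry (β ∘ vertex)) :=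
    funext fun h ↦ path_congr h fun j hj ↦ by rw [pad_of_lt _ hj]; rfl
  simp only [returnMap_eq]
  rw [expect_comp_injective vertex_injective fun c ↦ Φ (flow (curry c))]
  exact Fintype.expect_equiv (Equiv.curry _ _ _) _ _ fun _ ↦ rfl

/-- A directed cycle, given by its vertex set, that no path from a vertex `(u i, t)` visits. -/
def IsUnvisitedCycle {m : ℕ} (β : ZMod H × ZMod W → Bool) (t : ZMod W) (u : Fin m → ZMod H)
    (S : Set (ZMod H × ZMod W)) : Prop :=
  (∃ v, onCycle (bstep H W β) v ∧ S = {w | ∃ j, (bstep H W β)^[j] v = w}) ∧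
    ∀ i : Fin m, ∀ w ∈ S, ¬∃ j, (bstep H W β)^[j] (u i, t) = w

/-- Every directed cycle passes through the slice `t`. -/
lemma IsUnvisitedCycle.exists_periodicPt [NeZero W] {m : ℕ} {β : ZMod H × ZMod W → Bool}
    {t : ZMod W} {u : Fin m → ZMod H} {S : Set (ZMod H × ZMod W)}
    (hS : IsUnvisitedCycle β t u S) :
    ∃ h ∈ periodicPts (returnMap β t), (∀ i, returnMap β t h ≠ returnMap β t (u i)) ∧
      S = {w | ∃ j, (bstep H W β)^[j] (h, t) = w} := by
  obtain ⟨⟨⟨a, s⟩, hv, rfl⟩, hunvisited⟩ := hS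
  obtain ⟨h, hh⟩ : ∃ h, (bstep H W β)^[(t - s).val] (a, s) = (h, t) :=
    ⟨_, by rw [bstep_iterate, ZMod.natCast_zmod_val, add_sub_cancel]⟩
  have orbit_eq (w : ZMod H × ZMod W) :
      (∃ j, (bstep H W β)^[j] (a, s) = w) ↔ ∃ j, (bstep H W β)^[j] (h, t) = w :=
    hh ▸ (exists_iterate_iterate_eq_iff hv _ w).symm
  have hht : (h, t) ∈ periodicPts (bstep H W β) :=
    hh ▸ (bijOn_periodicPts (bstep H W β)).mapsTo.iterate _ hv
  refine ⟨h, ?_, fun i hi ↦ ?_, Set.ext orbit_eq⟩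
  · obtain ⟨k, hk, hper⟩ := hht
    refine ⟨k, hk, ?_⟩
    have := (hper.const_mul W).eq
    rw [bstep_iterate_width_mul] at this
    exact congrArg Prod.fst this
  · exact hunvisited i (returnMap β t h, t) ((orbit_eq _).2 ⟨W, bstep_iterate_width β h t⟩)
      ⟨W, by rw [bstep_iterate_width, hi]⟩

lemma natCard_isUnvisitedCycle_le [NeZero H] [NeZero W] {m : ℕ} (β : ZMod H × ZMod W → Bool)
    (t : ZMod W) (u : Fin m → ZMod H) :
    Nat.card {S // IsUnvisitedCycle β t u S} ≤
      Nat.card {h // h ∈ periodicPts (returnMap β t) ∧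
        ∀ i, returnMap β t h ≠ returnMap β t (u i)} := by
  choose h hper hne hS using
    fun S : {S // IsUnvisitedCycle β t u S} ↦ S.2.exists_periodicPt
  refine Nat.card_le_card_of_injective (fun S ↦ ⟨h S, hper S, hne S⟩) fun S S' hSS' ↦ ?_
  rw [Subtype.ext_iff, hS S, hS S', show h S = h S' from Subtype.ext_iff.1 hSS']

lemma expect_natCard_isUnvisitedCycle_le (d m : ℕ) (t : ZMod (2 ^ d)) :
    𝔼 u : Fin m → ZMod (2 ^ d), 𝔼 β : ZMod (2 ^ d) × ZMod (2 ^ d) → Bool,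
      (Nat.card {S // IsUnvisitedCycle β t u S} : ℝ) ≤ (2 + 768 ^ 3) * 512 / (m + 1) := by
  obtain ⟨J, n, hN, hrange, hsum⟩ := exists_window_parameters d
  let cycles (k : ℕ) (f : ZMod (2 ^ d) → ZMod (2 ^ d)) (u : Fin m → ZMod (2 ^ d)) : ℝ :=
    Nat.card {v : Fin (k + 1) → ZMod (2 ^ d) // IsAvoidingCycle f u v}
  have card_le (u : Fin m → ZMod (2 ^ d)) (β : ZMod (2 ^ d) × ZMod (2 ^ d) → Bool) :
      (Nat.card {S // IsUnvisitedCycle β t u S} : ℝ) ≤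
        ∑ k ∈ range (2 ^ d), cycles k (returnMap β t) u := by
    have := (natCard_isUnvisitedCycle_le β t u).trans (natCard_periodicPts_le_sum _ u)
    rw [ZMod.card] at this
    simp only [cycles]
    exact_mod_cast this
  calc 𝔼 u : Fin m → ZMod (2 ^ d), 𝔼 β : ZMod (2 ^ d) × ZMod (2 ^ d) → Bool,
        (Nat.card {S // IsUnvisitedCycle β t u S} : ℝ)
      ≤ 𝔼 u, 𝔼 β : ZMod (2 ^ d) × ZMod (2 ^ d) → Bool,
          ∑ k ∈ range (2 ^ d), cycles k (returnMap β t) u := by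
        gcongr; exact card_le _ _
    _ = ∑ k ∈ range (2 ^ d), 𝔼 u, 𝔼 σ : Fin (2 ^ d) → ZMod (2 ^ d) → Bool,
          cycles k (flow σ) u := by
        simp only [expect_sum_comm]
        exact sum_congr rfl fun k _ ↦ expect_congr rfl fun u _ ↦
          expect_returnMap t fun f ↦ cycles k f u
    _ ≤ ∑ k ∈ range (2 ^ d),
          1 / (1 + J * meetingRate d (k + 1)) * (meanRange d n / (m + 1)) := by
        gcongr with k
        exact expect_natCard_isAvoidingCycle_le hN
          (fun x ↦ prob_injective_flow_windows_le x J) m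
    _ ≤ 512 * ((2 + 768 ^ 3) / (m + 1)) := by
        have := meanRange_nonneg d n
        rw [← sum_mul]
        gcongr
    _ = _ := by ring

lemma sum_div_eq_expect [NeZero H] {m : ℕ}
    (F : ZMod H → (Fin m → ZMod H) → (ZMod H × ZMod H → Bool) → ℝ) :
    (∑ t, ∑ u, ∑ β, F t u β) / ((H : ℝ) * (H : ℝ) ^ m * 2 ^ (H * H)) = 𝔼 t, 𝔼 u, 𝔼 β, F t u β := by
  simp only [Fintype.expect_eq_sum_div_card, ← sum_div, div_div, Fintype.card_fun,
    Fintype.card_prod, ZMod.card, Fintype.card_fin, Fintype.card_bool, Nat.cast_pow, Nat.cast_two]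
  ring

end ReturnMap

end Butterfly

/-- In the nonmonotone ensemble on `Ω_{H,W}` with `W = H`
(`H = 2^d`), pick a uniformly random time slice `t₀` and `m` independent uniform
vertices of slice `t₀`, and follow the path from each of them until it revisits
a vertex (so the visited set of each path is its forward orbit).  There is a
universal constant `C` such that the expected number of directed cycles of the
random subgraph containing no visited vertex is at most `C/(m+1)`. -/
theorem statement12 :
    ∃ C > (0 : ℝ), ∀ d H m : ℕ, H = 2 ^ d → ∀ _ : NeZero H,
      (∑ t₀ : ZMod H, ∑ u : Fin m → ZMod H, ∑ β : ZMod H × ZMod H → Bool,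
          (Nat.card {S : Set (ZMod H × ZMod H) //
              (∃ v, onCycle (bstep H H β) v ∧
                S = {w | ∃ j, (bstep H H β)^[j] v = w}) ∧
              ∀ i : Fin m, ∀ w ∈ S,
                ¬ ∃ j, (bstep H H β)^[j] (u i, t₀) = w} : ℝ))
          / ((H : ℝ) * (H : ℝ) ^ m * 2 ^ (H * H))
        ≤ C / (m + 1) := by
  refine ⟨(2 + 768 ^ 3) * 512, by norm_num, ?_⟩
  rintro d H m rfl _
  exact (Butterfly.sum_div_eq_expect _).trans_le <| Finset.expect_le Finset.univ_nonempty
    fun t _ ↦ Butterfly.expect_natCard_isUnvisitedCycle_le d m t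
end

section
/- In the monotone ensemble on the wrapped extended butterfly Ω_{H,W}, consider the Las Vegas exploration: pick a uniformly random time slice t₀ and, starting from every vertex of slice t₀, follow all open directed paths forward in time for W steps, reading the input bit of every edge examined along the way. Then for every ε > 0 there is W₀ such that for all W ≥ W₀ and all H = 2^d, the probability that any given input bit is read is at most (4 + ε)·W^{−1}·log W. -/
/-- The endpoint of the outgoing edge with choice bit `c` of a vertex of the
wrapped extended butterfly `Ω_{H,W}`: the vertex `(h, t)` has edges to
`(2h, t+1)` and `(2h+1, t+1)`. -/
def mstep (H W : ℕ) (c : Bool) (v : ZMod H × ZMod W) : ZMod H × ZMod W :=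
  (2 * v.1 + (if c then 1 else 0), v.2 + 1)

/-- In the monotone ensemble, where `η e = true` means that the edge `e` (given
by its source vertex together with the choice bit) is open, `openReach H W η j u v`
says that there is a directed path of `j` open edges from `u` to `v`. -/
def openReach (H W : ℕ) (η : (ZMod H × ZMod W) × Bool → Bool) :
    ℕ → ZMod H × ZMod W → ZMod H × ZMod W → Prop
  | 0, u, v => u = v
  | j + 1, u, v => ∃ c : Bool, η (u, c) = true ∧ openReach H W η j (mstep H W c u) v

/-- A directed cycle of length exactly `W` (winding once) in the wrapped extended
butterfly `Ω_{H,W}`: the height `c t` at each time slice `t`, together with the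
choice bits `b t` of the traversed edges, satisfying the closedness condition. -/
structure BCycle (H W : ℕ) where
  c : ZMod W → ZMod H
  b : ZMod W → Bool
  closed : ∀ t, c (t + 1) = 2 * c t + (if b t then 1 else 0)

/-- The cycle `γ` is fully open in the configuration `η`. -/
def cycleOpen {H W : ℕ} (η : (ZMod H × ZMod W) × Bool → Bool) (γ : BCycle H W) :
    Prop :=
  ∀ t : ZMod W, η ((γ.c t, t), γ.b t) = true

/-!
An exploration started at slice `s` reads an edge out of `v` only if some open path ends at `v`
whose length `j` is the forward time from `s` to the slice of `v`. A path of at most `W` edges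
cannot wrap around and use its last edge twice, so the bit of that edge is independent of the rest
of the path. Every vertex has two incoming edges, and the events that an open path arrives through
them are increasing, hence positively correlated. So if `p` bounds the probability that an open path
of length `j < W` ends at a given vertex, then `1 - (1 - p / 2) ^ 2` bounds it for length `j + 1`;
by induction `4 / (j + 4)` bounds it for length `j`. Averaging over the `W` starting slices gives a
harmonic sum.
-/

section UniformProb

open scoped FinsetFamily

/-- The probability of the event `A` under the uniform distribution on the finite type `Ω`. It takes
the junk value `0` when `Ω` is empty or infinite. -/
noncomputable def uniformProb {Ω : Type*} (A : Set Ω) : ℝ :=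
  A.ncard / Nat.card Ω

variable {Ω : Type*} [Finite Ω]

theorem uniformProb_le_one (A : Set Ω) : uniformProb A ≤ 1 :=
  div_le_one_of_le₀ (mod_cast A.ncard_le_card) (Nat.cast_nonneg _)

theorem uniformProb_mono {A B : Set Ω} (h : A ⊆ B) : uniformProb A ≤ uniformProb B := by
  unfold uniformProb
  gcongr
  exact B.toFinite

theorem uniformProb_union_add_inter (A B : Set Ω) :
    uniformProb (A ∪ B) + uniformProb (A ∩ B) = uniformProb A + uniformProb B := by
  simp only [uniformProb, ← add_div]
  exact_mod_cast congrArg (fun n : ℕ ↦ (n : ℝ) / Nat.card Ω) (Set.ncard_union_add_ncard_inter A B)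

theorem uniformProb_eq_sum_div_card {S : Type*} [Fintype S] (A : Set (S × Ω)) :
    uniformProb A = (∑ s, uniformProb {ω | (s, ω) ∈ A}) / Nat.card S := by
  have ncard_eq_sum : A.ncard = ∑ s, {ω | (s, ω) ∈ A}.ncard :=
    (Nat.card_congr (Equiv.subtypeProdEquivSigmaSubtype fun s ω ↦ (s, ω) ∈ A)).trans
      Nat.card_sigma
  simp only [uniformProb, ncard_eq_sum, Nat.card_prod, ← Finset.sum_div, div_div, Nat.cast_mul,
    Nat.cast_sum, mul_comm]

theorem ncard_mul_ncard_le_card_mul_ncard_inter_of_isUpperSet [DistribLattice Ω] {A B : Set Ω}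
    (hA : IsUpperSet A) (hB : IsUpperSet B) :
    A.ncard * B.ncard ≤ Nat.card Ω * (A ∩ B).ncard := by
  classical
  have := Fintype.ofFinite Ω
  have sups_subset_inter : A.toFinset ⊻ B.toFinset ⊆ (A ∩ B).toFinset :=
    Finset.sups_subset_iff.2 fun a ha b hb ↦ Set.mem_toFinset.2
      ⟨hA le_sup_left (Set.mem_toFinset.1 ha), hB le_sup_right (Set.mem_toFinset.1 hb)⟩
  simp only [Set.ncard_eq_toFinset_card', Nat.card_eq_fintype_card]
  exact (Finset.le_card_infs_mul_card_sups _ _).trans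
    (Nat.mul_le_mul (Finset.card_le_univ _) (Finset.card_le_card sups_subset_inter))

theorem uniformProb_mul_le_inter_of_isUpperSet [DistribLattice Ω] {A B : Set Ω}
    (hA : IsUpperSet A) (hB : IsUpperSet B) :
    uniformProb A * uniformProb B ≤ uniformProb (A ∩ B) := by
  have count : (A.ncard * B.ncard : ℝ) ≤ Nat.card Ω * (A ∩ B).ncard :=
    mod_cast ncard_mul_ncard_le_card_mul_ncard_inter_of_isUpperSet hA hB
  calc uniformProb A * uniformProb B
      = A.ncard * B.ncard / (Nat.card Ω * Nat.card Ω) := div_mul_div_comm _ _ _ _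
    _ ≤ Nat.card Ω * (A ∩ B).ncard / (Nat.card Ω * Nat.card Ω) := by gcongr
    _ ≤ uniformProb (A ∩ B) := by
      rw [mul_div_mul_comm]
      exact mul_le_of_le_one_left (div_nonneg (Nat.cast_nonneg _) (Nat.cast_nonneg _))
        (div_self_le_one _)

theorem uniformProb_union_le_of_isUpperSet [DistribLattice Ω] {A B : Set Ω}
    (hA : IsUpperSet A) (hB : IsUpperSet B) :
    uniformProb (A ∪ B) ≤ 1 - (1 - uniformProb A) * (1 - uniformProb B) := by
  linarith [uniformProb_union_add_inter A B, uniformProb_mul_le_inter_of_isUpperSet hA hB]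

theorem uniformProb_apply_eq_true_inter {E : Type*} [Finite E] {e : E} {A : Set (E → Bool)}
    (hA : DependsOn (· ∈ A) {e}ᶜ) :
    uniformProb ({η | η e = true} ∩ A) = uniformProb A / 2 := by
  classical
  let flip : (E → Bool) → E → Bool := fun η ↦ Function.update η e (!η e)
  have flip_flip : Function.Involutive flip := fun η ↦ by simp [flip]
  have flip_mem_iff (η : E → Bool) : flip η ∈ A ↔ η ∈ A :=
    iff_of_eq <| hA fun x hx ↦ Function.update_of_ne hx _ _
  have image_flip : flip '' (A ∩ {η | η e = true}) = A \ {η | η e = true} := by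
    rw [Set.image_eq_preimage_of_inverse flip_flip flip_flip]
    ext η
    simp [flip_mem_iff, flip]
  have ncard_eq := Set.ncard_inter_add_ncard_sdiff_eq_ncard A {η | η e = true}
  rw [← image_flip, Set.ncard_image_of_injective _ flip_flip.injective] at ncard_eq
  rw [Set.inter_comm, uniformProb, uniformProb, ← ncard_eq]
  push_cast
  ring

end UniformProb

theorem sum_inv_add_le_log {a : ℝ} (ha : 0 < a) (n : ℕ) :
    ∑ j ∈ Finset.range n, (a + (j + 1 : ℕ))⁻¹ ≤ Real.log ((a + n) / a) := by
  have antitone : AntitoneOn (fun x : ℝ ↦ x⁻¹) (Set.Icc a (a + n)) := fun x hx y _ hxy ↦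
    inv_anti₀ (ha.trans_le hx.1) hxy
  exact antitone.sum_le_integral.trans_eq (integral_inv_of_pos ha (by positivity))

theorem sum_val_sub_eq_sum_range {M : Type*} [AddCommMonoid M] {W : ℕ} [NeZero W] (f : ℕ → M)
    (t : ZMod W) :
    ∑ s : ZMod W, f (t - s).val = ∑ j ∈ Finset.range W, f j := by
  refine (Equiv.sum_comp (Equiv.subLeft t) fun x : ZMod W ↦ f x.val).trans ?_
  cases W with
  | zero => exact absurd rfl (NeZero.ne 0)
  | succ m => exact Fin.sum_univ_eq_sum_range f (m + 1)

theorem one_sub_mul_one_sub_half_le {x p q : ℝ} (hx : 2 ≤ x) (hp : p ≤ 4 / x) (hq : q ≤ 4 / x) :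
    1 - (1 - p / 2) * (1 - q / 2) ≤ 4 / (x + 1) := by
  have : 0 < x := by linarith
  have factor_nonneg : 0 ≤ 1 - 4 / x / 2 := by
    rw [div_div, sub_nonneg, div_le_one (by linarith)]
    linarith
  calc 1 - (1 - p / 2) * (1 - q / 2)
      ≤ 1 - (1 - 4 / x / 2) * (1 - 4 / x / 2) := by gcongr; linarith
    _ = 4 * (x - 1) / x ^ 2 := by field_simp; ring
    _ ≤ 4 / (x + 1) := by
      rw [div_le_div_iff₀ (by positivity) (by positivity)]
      linarith

section OpenPath

variable {V E : Type*} (src tgt : E → V)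

/-- In the directed multigraph with edge set `E` and endpoint maps `src` and `tgt`, the vertex `v`
is the end of a directed path of `j` edges that are open in `η`. The recursion removes the last
edge, whereas that of `openReach` removes the first. -/
def HasOpenPathTo (η : E → Bool) : ℕ → V → Prop
  | 0, _ => True
  | j + 1, v => ∃ e, tgt e = v ∧ η e = true ∧ HasOpenPathTo η j (src e)

theorem isUpperSet_hasOpenPathTo (j : ℕ) (v : V) :
    IsUpperSet {η | HasOpenPathTo src tgt η j v} := by
  induction j generalizing v with
  | zero => exact fun _ _ _ _ ↦ trivial
  | succ j ih =>
    rintro η η' hle ⟨e, he, hopen, hpath⟩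
    exact ⟨e, he, hle e hopen, ih _ hle hpath⟩

variable {src tgt} {W : ℕ} {level : V → ZMod W}

theorem dependsOn_hasOpenPathTo (hlevel : ∀ e, level (tgt e) = level (src e) + 1) (j : ℕ) (v : V) :
    DependsOn (fun η ↦ HasOpenPathTo src tgt η j v)
      {e | ∃ i < j, level (tgt e) + (i : ℕ) = level v} := by
  induction j generalizing v with
  | zero => exact fun _ _ _ ↦ rfl
  | succ j ih =>
    intro η η' heq
    refine propext <| exists_congr fun e ↦ and_congr_right ?_
    rintro rfl
    have eq_last : η e = η' e := heq e ⟨0, j.succ_pos, by simp⟩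
    have eq_before : HasOpenPathTo src tgt η j (src e) = HasOpenPathTo src tgt η' j (src e) := by
      refine ih (src e) fun x ⟨i, hi, hx⟩ ↦ heq x ⟨i + 1, Nat.succ_lt_succ hi, ?_⟩
      rw [hlevel e, ← hx, Nat.cast_succ, add_assoc]
    rw [eq_last, eq_before]

theorem dependsOn_hasOpenPathTo_src (hlevel : ∀ e, level (tgt e) = level (src e) + 1) {j : ℕ}
    (hj : j < W) (e : E) :
    DependsOn (fun η ↦ HasOpenPathTo src tgt η j (src e)) {e}ᶜ := by
  refine (dependsOn_hasOpenPathTo hlevel j (src e)).mono ?_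
  rintro x ⟨i, hi, hx⟩ rfl
  have cast_eq_zero : ((i + 1 : ℕ) : ZMod W) = 0 := by
    rw [hlevel, add_assoc, add_eq_left] at hx
    rw [Nat.cast_succ, add_comm, hx]
  have := Nat.le_of_dvd i.succ_pos ((ZMod.natCast_eq_zero_iff _ _).1 cast_eq_zero)
  omega

theorem uniformProb_hasOpenPathTo_le [Finite E]
    (hlevel : ∀ e, level (tgt e) = level (src e) + 1)
    (hindegree : ∀ v, ∃ e₁ e₂, ∀ e, tgt e = v → e = e₁ ∨ e = e₂) {j : ℕ} (hj : j ≤ W) (v : V) :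
    uniformProb {η | HasOpenPathTo src tgt η j v} ≤ 4 / (j + 4) := by
  induction j generalizing v with
  | zero => simpa using uniformProb_le_one {η | HasOpenPathTo src tgt η 0 v}
  | succ j ih =>
    obtain ⟨e₁, e₂, hin⟩ := hindegree v
    let before (e : E) : Set (E → Bool) := {η | HasOpenPathTo src tgt η j (src e)}
    let via (e : E) : Set (E → Bool) := {η | η e = true} ∩ before e
    have isUpperSet_via (e : E) : IsUpperSet (via e) :=
      IsUpperSet.inter (fun _ _ hle hopen ↦ hle e hopen) (isUpperSet_hasOpenPathTo src tgt j _)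
    have uniformProb_via (e : E) : uniformProb (via e) = uniformProb (before e) / 2 :=
      uniformProb_apply_eq_true_inter (dependsOn_hasOpenPathTo_src hlevel hj e)
    have subset_via : {η | HasOpenPathTo src tgt η (j + 1) v} ⊆ via e₁ ∪ via e₂ := by
      rintro η ⟨e, he, hopen, hpath⟩
      rcases hin e he with rfl | rfl
      exacts [.inl ⟨hopen, hpath⟩, .inr ⟨hopen, hpath⟩]
    calc uniformProb {η | HasOpenPathTo src tgt η (j + 1) v}
        ≤ uniformProb (via e₁ ∪ via e₂) := uniformProb_mono subset_via
      _ ≤ 1 - (1 - uniformProb (via e₁)) * (1 - uniformProb (via e₂)) :=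
        uniformProb_union_le_of_isUpperSet (isUpperSet_via e₁) (isUpperSet_via e₂)
      _ = 1 - (1 - uniformProb (before e₁) / 2) * (1 - uniformProb (before e₂) / 2) := by
        rw [uniformProb_via, uniformProb_via]
      _ ≤ 4 / ((j + 4 : ℝ) + 1) :=
        one_sub_mul_one_sub_half_le (by linarith [j.cast_nonneg (α := ℝ)])
          (ih (Nat.le_of_succ_le hj) _) (ih (Nat.le_of_succ_le hj) _)
      _ = 4 / ((j + 1 : ℕ) + 4) := by push_cast; ring

end OpenPath

section Butterfly

/-- The endpoint of an edge of the butterfly, the edge being given by its source vertex together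
with its choice bit. -/
def edgeTarget (H W : ℕ) (e : (ZMod H × ZMod W) × Bool) : ZMod H × ZMod W :=
  mstep H W e.2 e.1

variable {H W : ℕ}

theorem openReach.snd_eq {η : (ZMod H × ZMod W) × Bool → Bool} {j : ℕ} {u v : ZMod H × ZMod W}
    (h : openReach H W η j u v) : v.2 = u.2 + j := by
  induction j generalizing u with
  | zero => simp [show u = v from h]
  | succ j ih =>
    obtain ⟨c, -, h⟩ := h
    rw [ih h, mstep, Nat.cast_succ]
    ring

theorem openReach.hasOpenPathTo_add {η : (ZMod H × ZMod W) × Bool → Bool} {j k : ℕ}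
    {u v : ZMod H × ZMod W} (h : openReach H W η j u v)
    (hu : HasOpenPathTo Prod.fst (edgeTarget H W) η k u) :
    HasOpenPathTo Prod.fst (edgeTarget H W) η (k + j) v := by
  induction j generalizing k u with
  | zero => exact (show u = v from h) ▸ hu
  | succ j ih =>
    obtain ⟨c, hopen, h⟩ := h
    rw [← add_assoc, add_right_comm]
    exact ih h ⟨(u, c), rfl, hopen, hu⟩

theorem bit_val_eq_val_or_eq_val_add [NeZero H] (a : ZMod H) (c : Bool) :
    Nat.bit c a.val = (2 * a + if c then 1 else 0).val ∨
      Nat.bit c a.val = (2 * a + if c then 1 else 0).val + H := by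
  have cast_bit : ((Nat.bit c a.val : ℕ) : ZMod H) = 2 * a + if c then 1 else 0 := by
    cases c <;> simp [Nat.bit_val]
  have bit_lt : Nat.bit c a.val < 2 * H := by
    have := a.val_lt
    have := c.toNat_le
    rw [Nat.bit_val]
    omega
  rw [← cast_bit, ZMod.val_natCast]
  rcases lt_or_ge (Nat.bit c a.val) H with hlt | hge
  · exact .inl (Nat.mod_eq_of_lt hlt).symm
  · rw [Nat.mod_eq_sub_mod hge, Nat.mod_eq_of_lt (by omega)]
    exact .inr (Nat.sub_add_cancel hge).symm

-- An edge with source height `a` and choice bit `c` into `v` is recovered from `2 * a + c < 2 * H`,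
-- whose residue modulo `H` is the height of `v`.
theorem exists_forall_edgeTarget_eq [NeZero H] (v : ZMod H × ZMod W) :
    ∃ e₁ e₂, ∀ e, edgeTarget H W e = v → e = e₁ ∨ e = e₂ := by
  let edge (n : ℕ) : (ZMod H × ZMod W) × Bool := (((n / 2 : ℕ), v.2 - 1), n.bodd)
  refine ⟨edge v.1.val, edge (v.1.val + H), ?_⟩
  rintro ⟨⟨a, s⟩, c⟩ rfl
  have edge_bit : ((a, s), c) = edge (Nat.bit c a.val) := by
    simp [edge, edgeTarget, mstep]
  exact (bit_val_eq_val_or_eq_val_add a c).imp (fun h ↦ edge_bit.trans (congrArg edge h))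
    (fun h ↦ edge_bit.trans (congrArg edge h))

theorem uniformProb_hasOpenPathTo_edgeTarget_le [NeZero H] [NeZero W] {j : ℕ} (hj : j ≤ W)
    (v : ZMod H × ZMod W) :
    uniformProb {η | HasOpenPathTo Prod.fst (edgeTarget H W) η j v} ≤ 4 / (j + 4) :=
  uniformProb_hasOpenPathTo_le (level := Prod.snd) (fun _ ↦ rfl) exists_forall_edgeTarget_eq hj v

/-- The event that the Las Vegas exploration reads the bit of the edge `e`, on the sample space of
pairs of a starting slice and a configuration. The bit of `e` is read exactly when the source of `e`
is reached within fewer than `W` steps. -/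
def readEvent (H W : ℕ) (e : (ZMod H × ZMod W) × Bool) :
    Set (ZMod W × ((ZMod H × ZMod W) × Bool → Bool)) :=
  {p | ∃ u : ZMod H, ∃ j < W, openReach H W p.2 j (u, p.1) e.1}

theorem readEvent_slice_subset (e : (ZMod H × ZMod W) × Bool) (s : ZMod W) :
    {η | (s, η) ∈ readEvent H W e} ⊆
      {η | HasOpenPathTo Prod.fst (edgeTarget H W) η (e.1.2 - s).val e.1} := by
  rintro η ⟨u, j, hj, hreach⟩
  have val_eq : (e.1.2 - s).val = j := by
    rw [hreach.snd_eq, add_sub_cancel_left, ZMod.val_cast_of_lt hj]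
  simpa only [Set.mem_ofPred_eq, val_eq, zero_add] using hreach.hasOpenPathTo_add (k := 0) trivial

theorem uniformProb_readEvent_le [NeZero H] [NeZero W] (e : (ZMod H × ZMod W) × Bool) :
    uniformProb (readEvent H W e) ≤ 4 * Real.log ((3 + W) / 3) / W := by
  have slice_le (s : ZMod W) :
      uniformProb {η | (s, η) ∈ readEvent H W e} ≤ 4 / ((e.1.2 - s).val + 4) :=
    (uniformProb_mono (readEvent_slice_subset e s)).trans
      (uniformProb_hasOpenPathTo_edgeTarget_le (ZMod.val_lt _).le _)
  calc uniformProb (readEvent H W e)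
      = (∑ s, uniformProb {η | (s, η) ∈ readEvent H W e}) / W := by
        rw [uniformProb_eq_sum_div_card, Nat.card_zmod]
    _ ≤ (∑ s, 4 / ((e.1.2 - s).val + 4 : ℝ)) / W := by gcongr; exact slice_le _
    _ = 4 * (∑ j ∈ Finset.range W, (3 + (j + 1 : ℕ) : ℝ)⁻¹) / W := by
        rw [sum_val_sub_eq_sum_range (fun j ↦ 4 / (j + 4 : ℝ)), Finset.mul_sum]
        congr! 2 with j
        push_cast
        ring
    _ ≤ 4 * Real.log ((3 + W) / 3) / W := by
        gcongr
        exact sum_inv_add_le_log three_pos W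

end Butterfly

theorem statement13_general (H W : ℕ) [NeZero H] (hW : 2 ≤ W) (e : (ZMod H × ZMod W) × Bool) :
    (Nat.card {p : ZMod W × ((ZMod H × ZMod W) × Bool → Bool) //
        ∃ u : ZMod H, ∃ j < W, openReach H W p.2 j (u, p.1) e.1} : ℝ)
        / ((W : ℝ) * 2 ^ (2 * H * W))
      ≤ 4 * Real.log W / W := by
  have : NeZero W := ⟨by omega⟩
  have hW' : (2 : ℝ) ≤ W := mod_cast hW
  have card_sampleSpace : (Nat.card (ZMod W × ((ZMod H × ZMod W) × Bool → Bool)) : ℝ)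
      = W * 2 ^ (2 * H * W) := by
    rw [Nat.card_prod, Nat.card_fun, Nat.card_prod, Nat.card_prod, Nat.card_zmod, Nat.card_zmod,
      Nat.card_eq_fintype_card, Fintype.card_bool, mul_comm (H * W), ← mul_assoc]
    push_cast
    rfl
  calc _ = uniformProb (readEvent H W e) := by rw [uniformProb, card_sampleSpace]; rfl
    _ ≤ 4 * Real.log ((3 + W) / 3) / W := uniformProb_readEvent_le e
    _ ≤ 4 * Real.log W / W := by gcongr; linarith

/-- In the monotone ensemble on `Ω_{H,W}`, the Las Vegas
exploration picks a uniformly random time slice `t₀` and follows all open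
directed paths from the vertices of slice `t₀` forward for `W` steps, reading
the bits of both outgoing edges of every vertex reached within fewer than `W`
steps.  For every `ε > 0` there is `W₀` such that for all `W ≥ W₀` and all
`H = 2^d`, each given input bit is read with probability at most
`(4 + ε)·W⁻¹·log W` (probability over the uniform slice `t₀` and the `2·H·W`
uniform edge bits). -/
theorem statement13 :
    ∀ ε > (0 : ℝ), ∃ W₀ : ℕ, ∀ W ≥ W₀, ∀ d H : ℕ, H = 2 ^ d →
      ∀ e : (ZMod H × ZMod W) × Bool,
        (Nat.card {p : ZMod W × ((ZMod H × ZMod W) × Bool → Bool) //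
            ∃ u : ZMod H, ∃ j < W, openReach H W p.2 j (u, p.1) e.1} : ℝ)
            / ((W : ℝ) * 2 ^ (2 * H * W))
          ≤ (4 + ε) * Real.log W / W := by
  intro ε hε
  refine ⟨2, fun W hW d H hH e ↦ ?_⟩
  have : NeZero H := ⟨by simp [hH]⟩
  exact (statement13_general H W hW e).trans (by gcongr; linarith)
end

section
/- Let H = 2^d, W ≥ d, and let N_{H,W} be the number of directed cycles of length exactly W in the wrapped extended butterfly Ω_{H,W} all of whose edges are open in the monotone ensemble. Then E[N_{H,W}²] ≤ exp(W/√(2H)) + exp(−W/√(2H)), and consequently Pr[N_{H,W} > 0] ≥ 1/(exp(W/√(2H)) + exp(−W/√(2H))). -/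
/-!
Sampling a cycle is sampling its `W` choice bits, since doubling modulo `2 ^ d` forgets all but the
last `d` of them. Two cycles share the edge at time `t` exactly when their bits agree on the `d + 1`
positions ending at `t`, so the second moment is the average of `2 ^ |Z|`, where `Z` is the set of
ends of runs of `d + 1` agreements between two uniform bit sequences. Every maximal arc of `Z` is
preceded by `d` further agreements and followed by a disagreement, so a given `Z` with `2m` boundary
points has probability at most `2 ^ (-|Z|) * y ^ (2m)`, where `y = 1 / √(2H)`. Summing `y ^ (2m)`
over all subsets of the cycle `ℤ/W` gives at most `(1 + y) ^ W + (1 - y) ^ W`, hence the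
exponential bound. As the mean is `1`, the lower bound on the probability is then Cauchy–Schwarz.
-/

open Finset
open scoped BigOperators Pointwise

lemma sum_comp_le_sum_of_injective {α β M : Type*} [Fintype α] [Fintype β]
    [AddCommMonoid M] [PartialOrder M] [IsOrderedAddMonoid M] {g : α → β}
    (hg : Function.Injective g) {f : β → M} (hf : ∀ b, 0 ≤ f b) : ∑ a, f (g a) ≤ ∑ b, f b := by
  classical
  rw [← sum_image (f := f) hg.injOn]
  exact sum_le_univ_sum_of_nonneg hf

section SecondMoment

lemma sq_expect_le_expect_sq_mul_card_ne_zero {Ω 𝕜 : Type*} [Fintype Ω] [Field 𝕜]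
    [LinearOrder 𝕜] [IsStrictOrderedRing 𝕜] (X : Ω → 𝕜) :
    (𝔼 ω, X ω) ^ 2 ≤ (𝔼 ω, X ω ^ 2) * (Nat.card {ω // X ω ≠ 0} / Fintype.card Ω) := by
  have hcs := expect_mul_sq_le_sq_mul_sq univ X fun ω => if X ω ≠ 0 then 1 else 0
  have hprob : 𝔼 ω, (if X ω ≠ 0 then (1 : 𝕜) else 0) ^ 2
      = Nat.card {ω // X ω ≠ 0} / Fintype.card Ω := by
    simp only [ite_pow, one_pow, zero_pow two_ne_zero, Fintype.expect_eq_sum_div_card, sum_boole,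
      Nat.card_eq_fintype_card, Fintype.card_subtype]
  have hsupp (ω : Ω) : (X ω * if X ω ≠ 0 then 1 else 0) = X ω := by
    by_cases h : X ω = 0 <;> simp [h]
  simpa only [hsupp, hprob] using hcs

variable {α ι : Type*}

/-- The number of members of a family of sets `S i` all of whose elements are open in the
configuration `η`. -/
noncomputable def numOpen (S : ι → Finset α) (η : α → Bool) : ℕ :=
  Nat.card {i // ∀ a ∈ S i, η a = true}

variable [Fintype α] [DecidableEq α]

lemma expect_forall_mem_eq_true (S : Finset α) :
    𝔼 η : α → Bool, (if ∀ a ∈ S, η a = true then (1 : ℝ) else 0) = (1 / 2) ^ #S := by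
  have hpi : ({η | ∀ a ∈ S, η a = true} : Finset (α → Bool))
      = Fintype.piFinset fun a => if a ∈ S then {true} else univ := by
    ext η
    simp only [mem_filter_univ, Fintype.mem_piFinset]
    refine forall_congr' fun a => ?_
    by_cases ha : a ∈ S <;> simp [ha]
  have hfactor (a : α) : (#(if a ∈ S then {true} else univ : Finset Bool) : ℝ) / 2
      = if a ∈ S then 1 / 2 else 1 := by
    by_cases ha : a ∈ S <;> simp [ha]
  calc 𝔼 η : α → Bool, (if ∀ a ∈ S, η a = true then (1 : ℝ) else 0)
      = ∏ a, (#(if a ∈ S then {true} else univ : Finset Bool) : ℝ) / 2 := by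
        rw [Fintype.expect_eq_sum_div_card, sum_boole, hpi, Fintype.card_piFinset, prod_div_distrib]
        simp
    _ = (1 / 2) ^ #S := by simp only [hfactor, prod_ite_mem, univ_inter, prod_const]

variable [Fintype ι]

lemma natCast_numOpen (S : ι → Finset α) (η : α → Bool) :
    (numOpen S η : ℝ) = ∑ i, if ∀ a ∈ S i, η a = true then 1 else 0 := by
  rw [numOpen, Nat.card_eq_fintype_card, Fintype.card_subtype, sum_boole]

lemma expect_numOpen (S : ι → Finset α) :
    𝔼 η, (numOpen S η : ℝ) = ∑ i, (1 / 2) ^ #(S i) := by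
  simp only [natCast_numOpen, expect_sum_comm, expect_forall_mem_eq_true]

lemma expect_numOpen_sq (S : ι → Finset α) :
    𝔼 η, (numOpen S η : ℝ) ^ 2 = ∑ i, ∑ j, (1 / 2) ^ #(S i ∪ S j) := by
  have hsq (η : α → Bool) : (numOpen S η : ℝ) ^ 2
      = ∑ i, ∑ j, if ∀ a ∈ S i ∪ S j, η a = true then 1 else 0 := by
    simp only [natCast_numOpen, sq, sum_mul_sum]
    refine sum_congr rfl fun i _ => sum_congr rfl fun j _ => ?_
    rw [ite_zero_mul_ite_zero, one_mul]
    simp only [forall_mem_union]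
  simp only [hsq, expect_sum_comm, expect_forall_mem_eq_true]

lemma expect_numOpen_eq_one {S : ι → Finset α} {w : ℕ} (hι : Fintype.card ι = 2 ^ w)
    (hS : ∀ i, #(S i) = w) : 𝔼 η, (numOpen S η : ℝ) = 1 := by
  simp [expect_numOpen, hS, hι]

lemma expect_numOpen_sq_le {S : ι → Finset α} {w : ℕ} {K : ℝ} (hι : Fintype.card ι = 2 ^ w)
    (hS : ∀ i, #(S i) = w) (hK : ∀ i, ∑ j, (2 : ℝ) ^ #(S i ∩ S j) ≤ 2 ^ w * K) :
    𝔼 η, (numOpen S η : ℝ) ^ 2 ≤ K := by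
  have hunion (i j : ι) : (1 / 2 : ℝ) ^ #(S i ∪ S j) = 2 ^ #(S i ∩ S j) / (2 ^ w * 2 ^ w) := by
    have hcard : #(S i ∪ S j) + #(S i ∩ S j) = w + w := by rw [card_union_add_card_inter, hS, hS]
    rw [one_div_pow, div_eq_div_iff (by positivity) (by positivity), one_mul, ← pow_add, ← pow_add,
      ← hcard, add_comm]
  calc 𝔼 η, (numOpen S η : ℝ) ^ 2
      = ∑ i, (∑ j, (2 : ℝ) ^ #(S i ∩ S j)) / (2 ^ w * 2 ^ w) := by
        simp only [expect_numOpen_sq, hunion, sum_div]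
    _ ≤ ∑ _i : ι, (2 ^ w * K) / (2 ^ w * 2 ^ w) := by gcongr; exact hK _
    _ = K := by
        rw [sum_const, card_univ, hι, nsmul_eq_mul]
        push_cast
        field_simp

end SecondMoment

section Boundary

variable {G : Type*} [AddCommGroupWithOne G] [DecidableEq G]

lemma mem_one_vadd_finset {Z : Finset G} {t : G} : t ∈ (1 : G) +ᵥ Z ↔ t - 1 ∈ Z := by
  rw [← neg_vadd_mem_iff, vadd_eq_add, neg_add_eq_sub]

/-- The points at which `Z` starts, reading along `t ↦ t + 1`. -/
def entries (Z : Finset G) : Finset G := Z \ ((1 : G) +ᵥ Z)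

/-- The points immediately after those at which `Z` stops, reading along `t ↦ t + 1`. -/
def exits (Z : Finset G) : Finset G := ((1 : G) +ᵥ Z) \ Z

/-- The points `t` such that exactly one of `t - 1` and `t` lies in `Z`. -/
def shiftBoundary (Z : Finset G) : Finset G := symmDiff Z ((1 : G) +ᵥ Z)

lemma mem_entries {Z : Finset G} {t : G} : t ∈ entries Z ↔ t ∈ Z ∧ t - 1 ∉ Z := by
  rw [entries, mem_sdiff, mem_one_vadd_finset]

lemma mem_exits {Z : Finset G} {t : G} : t ∈ exits Z ↔ t - 1 ∈ Z ∧ t ∉ Z := by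
  rw [exits, mem_sdiff, mem_one_vadd_finset]

lemma card_entries_eq_card_exits (Z : Finset G) : #(entries Z) = #(exits Z) :=
  card_sdiff_comm (card_vadd_finset 1 Z).symm

lemma card_shiftBoundary (Z : Finset G) : #(shiftBoundary Z) = 2 * #(exits Z) := by
  calc #(shiftBoundary Z) = #(entries Z) + #(exits Z) :=
        card_union_of_disjoint disjoint_sdiff_sdiff
    _ = 2 * #(exits Z) := by rw [card_entries_eq_card_exits, two_mul]

lemma eq_of_shiftBoundary_eq {W : ℕ} [NeZero W] {Z Z' : Finset (ZMod W)}
    (h₀ : 0 ∈ Z ↔ 0 ∈ Z') (h : shiftBoundary Z = shiftBoundary Z') : Z = Z' := by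
  have hnat (n : ℕ) : (n : ZMod W) ∈ Z ↔ (n : ZMod W) ∈ Z' := by
    induction n with
    | zero => simpa using h₀
    | succ n ih =>
      have hn := Finset.ext_iff.mp h (n + 1 : ℕ)
      simp only [shiftBoundary, mem_symmDiff, mem_one_vadd_finset, Nat.cast_add_one,
        add_sub_cancel_right] at hn ⊢
      tauto
  ext t
  simpa using hnat t.val

/-- A set is determined by its boundary together with the membership of `0`, and boundaries have
even cardinality: averaging over `±y` discards the subsets of odd cardinality. -/
lemma sum_pow_card_shiftBoundary_le (W : ℕ) [NeZero W] (y : ℝ) :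
    ∑ Z : Finset (ZMod W), y ^ #(shiftBoundary Z) ≤ (1 + y) ^ W + (1 - y) ^ W := by
  let evenPart (p : Bool × Finset (ZMod W)) : ℝ := (y ^ #p.2 + (-y) ^ #p.2) / 2
  have evenPart_nonneg (p : Bool × Finset (ZMod W)) : 0 ≤ evenPart p := by
    rcases Nat.even_or_odd #p.2 with hp | hp
    · simpa [evenPart, hp.neg_pow] using hp.pow_nonneg y
    · simp [evenPart, hp.neg_pow]
  have hinj : Function.Injective fun Z : Finset (ZMod W) => (decide (0 ∈ Z), shiftBoundary Z) := by
    intro Z Z' h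
    rw [Prod.mk.injEq, decide_eq_decide] at h
    exact eq_of_shiftBoundary_eq h.1 h.2
  have sum_pow_card (z : ℝ) : ∑ T : Finset (ZMod W), z ^ #T = (1 + z) ^ W := by
    simpa [add_comm] using Fintype.sum_pow_mul_eq_add_pow (ZMod W) z 1
  calc ∑ Z : Finset (ZMod W), y ^ #(shiftBoundary Z)
      = ∑ Z : Finset (ZMod W), evenPart (decide (0 ∈ Z), shiftBoundary Z) := by
        refine sum_congr rfl fun Z _ => ?_
        simp [evenPart, card_shiftBoundary, pow_mul]
    _ ≤ ∑ p, evenPart p := sum_comp_le_sum_of_injective hinj evenPart_nonneg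
    _ = (1 + y) ^ W + (1 - y) ^ W := by
        simp only [evenPart, Fintype.sum_prod_type, Fintype.sum_bool, ← sum_div, sum_add_distrib,
          sum_pow_card]
        ring

end Boundary

section Runs

variable {G : Type*} [AddCommGroupWithOne G] [DecidableEq G] {d : ℕ}

/-- The `d` points preceding each entry of `Z`. -/
def leadIn (d : ℕ) (Z : Finset G) : Finset G :=
  (Icc 1 d).biUnion fun i => -(i : G) +ᵥ entries Z

lemma mem_leadIn {Z : Finset G} {t : G} :
    t ∈ leadIn d Z ↔ ∃ i ∈ Icc 1 d, ∃ s ∈ entries Z, s - (i : G) = t := by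
  simp only [leadIn, mem_biUnion, mem_vadd_finset, vadd_eq_add, neg_add_eq_sub]

variable [Fintype G] {A : Finset G}

/-- The last points of the runs of `d + 1` consecutive elements of `A`. -/
def runEnds (d : ℕ) (A : Finset G) : Finset G := {t | ∀ i ≤ d, t - (i : G) ∈ A}

lemma mem_runEnds {t : G} : t ∈ runEnds d A ↔ ∀ i ≤ d, t - (i : G) ∈ A := mem_filter_univ t

lemma runEnds_subset (d : ℕ) (A : Finset G) : runEnds d A ⊆ A := fun t ht => by
  simpa using mem_runEnds.mp ht 0 d.zero_le

lemma mem_runEnds_of_sub_one_mem {t : G} (ht : t - 1 ∈ runEnds d A) (htA : t ∈ A) :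
    t ∈ runEnds d A := by
  rw [mem_runEnds] at ht ⊢
  rintro (_ | i) hi
  · simpa using htA
  · simpa [sub_sub, add_comm] using ht i (by lia)

lemma disjoint_exits_runEnds (d : ℕ) (A : Finset G) : Disjoint (exits (runEnds d A)) A := by
  refine disjoint_left.mpr fun t ht htA => ?_
  obtain ⟨hprev, hnot⟩ := mem_exits.mp ht
  exact hnot (mem_runEnds_of_sub_one_mem hprev htA)

/-- Otherwise the runs ending at `s` and at `s - i` would cover one ending at `s - 1`. -/
lemma sub_notMem_runEnds_of_mem_entries {s : G} (hs : s ∈ entries (runEnds d A)) {i : ℕ}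
    (hi : i ∈ Icc 1 d) : s - (i : G) ∉ runEnds d A := by
  obtain ⟨hi₁, hid⟩ := mem_Icc.mp hi
  obtain ⟨hs, hprev⟩ := mem_entries.mp hs
  refine fun hsi => hprev (mem_runEnds.mpr fun j hj => ?_)
  rcases hj.lt_or_eq with hlt | rfl
  · simpa [sub_sub, add_comm] using mem_runEnds.mp hs (j + 1) hlt
  · have := mem_runEnds.mp hsi (j + 1 - i) (by lia)
    rwa [sub_sub, ← Nat.cast_add, show i + (j + 1 - i) = 1 + j by lia, Nat.cast_add, Nat.cast_one,
      ← sub_sub] at this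

lemma leadIn_runEnds_subset (d : ℕ) (A : Finset G) : leadIn d (runEnds d A) ⊆ A := by
  intro t ht
  obtain ⟨i, hi, s, hs, rfl⟩ := mem_leadIn.mp ht
  exact mem_runEnds.mp (mem_entries.mp hs).1 i (mem_Icc.mp hi).2

lemma disjoint_runEnds_leadIn (d : ℕ) (A : Finset G) :
    Disjoint (runEnds d A) (leadIn d (runEnds d A)) := by
  refine disjoint_right.mpr fun t ht => ?_
  obtain ⟨i, hi, s, hs, rfl⟩ := mem_leadIn.mp ht
  exact sub_notMem_runEnds_of_mem_entries hs hi

lemma card_leadIn_runEnds (d : ℕ) (A : Finset G) :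
    #(leadIn d (runEnds d A)) = d * #(exits (runEnds d A)) := by
  have hlt {i j : ℕ} (hi : 1 ≤ i) (hj : j ≤ d) (hij : i < j) :
      Disjoint (-(i : G) +ᵥ entries (runEnds d A)) (-(j : G) +ᵥ entries (runEnds d A)) := by
    simp only [disjoint_left, mem_vadd_finset, vadd_eq_add, neg_add_eq_sub]
    rintro _ ⟨s, hs, rfl⟩ ⟨s', hs', h⟩
    refine sub_notMem_runEnds_of_mem_entries hs' (i := j - i) (mem_Icc.mpr (by lia)) ?_
    have hss' : s' - ((j - i : ℕ) : G) = s := by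
      rw [Nat.cast_sub hij.le, sub_sub_eq_add_sub, add_sub_right_comm, h, sub_add_cancel]
    exact hss' ▸ (mem_entries.mp hs).1
  have hdisj : (Set.Icc 1 d).PairwiseDisjoint
      fun i => -(i : G) +ᵥ entries (runEnds d A) := by
    intro i hi j hj hij
    rcases hij.lt_or_gt with h | h
    · exact hlt hi.1 hj.2 h
    · exact (hlt hj.1 hi.2 h).symm
  rw [leadIn, card_biUnion (by simpa using hdisj)]
  simp [card_entries_eq_card_exits]

/-- A set whose run ends are `Z` contains `Z` and its lead-in and avoids the exits of `Z`. -/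
lemma card_filter_runEnds_eq_mul_le (d : ℕ) (A : Finset G) :
    #{B | runEnds d B = runEnds d A} * 2 ^ (#(runEnds d A) + (d + 1) * #(exits (runEnds d A)))
      ≤ 2 ^ Fintype.card G := by
  set Z := runEnds d A
  have hfiber : ({B | runEnds d B = Z} : Finset (Finset G))
      ⊆ Icc (Z ∪ leadIn d Z) (exits Z)ᶜ := by
    intro B hB
    rw [mem_filter_univ] at hB
    rw [mem_Icc, ← hB]
    exact ⟨union_subset (runEnds_subset d B) (leadIn_runEnds_subset d B),
      subset_compl_iff_disjoint_left.mpr (disjoint_exits_runEnds d B)⟩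
  have hsub : Z ∪ leadIn d Z ⊆ (exits Z)ᶜ :=
    nonempty_Icc.mp ⟨A, hfiber ((mem_filter_univ A).mpr rfl)⟩
  have hforced : #(Z ∪ leadIn d Z) = #Z + d * #(exits Z) := by
    rw [card_union_of_disjoint (disjoint_runEnds_leadIn d A), card_leadIn_runEnds]
  calc #{B | runEnds d B = Z} * 2 ^ (#Z + (d + 1) * #(exits Z))
      ≤ 2 ^ (#(exits Z)ᶜ - #(Z ∪ leadIn d Z)) * 2 ^ (#Z + (d + 1) * #(exits Z)) := by
        gcongr
        exact (card_le_card hfiber).trans_eq (card_Icc_finset hsub)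
    _ = 2 ^ Fintype.card G := by
        have hle := card_le_card hsub
        have hcompl := card_add_card_compl (exits Z)
        rw [← pow_add]
        congr 1
        lia

lemma sum_two_pow_card_runEnds_le (d W : ℕ) [NeZero W] {y : ℝ} (hy : 2 ^ (d + 1) * y ^ 2 = 1) :
    ∑ A : Finset (ZMod W), (2 : ℝ) ^ #(runEnds d A) ≤ 2 ^ W * ((1 + y) ^ W + (1 - y) ^ W) := by
  have hfiber (A : Finset (ZMod W)) : (#{B | runEnds d B = runEnds d A} : ℝ) * 2 ^ #(runEnds d A)
      ≤ 2 ^ W * y ^ #(shiftBoundary (runEnds d A)) := by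
    have hcard : (#{B | runEnds d B = runEnds d A} : ℝ)
        * 2 ^ (#(runEnds d A) + (d + 1) * #(exits (runEnds d A))) ≤ 2 ^ W := by
      exact_mod_cast (card_filter_runEnds_eq_mul_le d A).trans_eq (by rw [ZMod.card])
    calc (#{B | runEnds d B = runEnds d A} : ℝ) * 2 ^ #(runEnds d A)
        = #{B | runEnds d B = runEnds d A} * 2 ^ #(runEnds d A)
            * (2 ^ (d + 1) * y ^ 2) ^ #(exits (runEnds d A)) := by rw [hy, one_pow, mul_one]
      _ = #{B | runEnds d B = runEnds d A}
            * 2 ^ (#(runEnds d A) + (d + 1) * #(exits (runEnds d A)))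
            * y ^ #(shiftBoundary (runEnds d A)) := by rw [card_shiftBoundary]; ring
      _ ≤ 2 ^ W * y ^ #(shiftBoundary (runEnds d A)) := by
          gcongr
          rw [card_shiftBoundary, pow_mul]
          positivity
  calc ∑ A : Finset (ZMod W), (2 : ℝ) ^ #(runEnds d A)
      = ∑ Z ∈ univ.image (runEnds d), (#{B : Finset (ZMod W) | runEnds d B = Z} : ℝ) * 2 ^ #Z := by
        rw [sum_comp (fun Z : Finset (ZMod W) => (2 : ℝ) ^ #Z) (runEnds d)]
        simp only [nsmul_eq_mul]
    _ ≤ ∑ Z ∈ univ.image (runEnds d), 2 ^ W * y ^ #(shiftBoundary Z) :=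
        sum_le_sum <| forall_mem_image.mpr fun A _ => hfiber A
    _ ≤ ∑ Z : Finset (ZMod W), 2 ^ W * y ^ #(shiftBoundary Z) := by
        refine sum_le_univ_sum_of_nonneg fun Z => ?_
        rw [card_shiftBoundary, pow_mul]
        positivity
    _ ≤ 2 ^ W * ((1 + y) ^ W + (1 - y) ^ W) := by
        rw [← mul_sum]
        gcongr
        exact sum_pow_card_shiftBoundary_le W y

end Runs

section Agreement

variable {G : Type*} [Fintype G]

/-- The positions at which two bit sequences agree. -/
def agreement (b b' : G → Bool) : Finset G := {t | b t = b' t}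

lemma agreement_injective (b : G → Bool) : Function.Injective (agreement b) := by
  intro b₁ b₂ h
  funext t
  have ht : b t = b₁ t ↔ b t = b₂ t := by simpa [agreement] using Finset.ext_iff.mp h t
  revert ht
  cases b t <;> cases b₁ t <;> cases b₂ t <;> simp

end Agreement

section Cycles

variable {d W : ℕ}

lemma natCast_ofBits_succ (f : Fin (d + 1) → Bool) :
    (Nat.ofBits f : ZMod (2 ^ d)) = Nat.ofBits (f ∘ Fin.castSucc) := by
  have htestBit : (fun i : Fin d => (Nat.ofBits f).testBit i) = f ∘ Fin.castSucc :=
    funext fun i => Nat.testBit_ofBits_lt f i (i.2.trans d.lt_succ_self)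
  rw [← htestBit, Nat.ofBits_testBit, ZMod.natCast_mod]

lemma natCast_ofBits_injective (d : ℕ) :
    Function.Injective fun f : Fin d → Bool => (Nat.ofBits f : ZMod (2 ^ d)) := by
  intro f g h
  rw [ZMod.natCast_eq_natCast_iff', Nat.mod_eq_of_lt (Nat.ofBits_lt_two_pow f),
    Nat.mod_eq_of_lt (Nat.ofBits_lt_two_pow g)] at h
  funext i
  rw [← Nat.testBit_ofBits_lt f i i.2, h, Nat.testBit_ofBits_lt g i i.2]

/-- The height at time `t` of the cycle with choice bits `b`: modulo `2 ^ d`, only the last `d` bits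
survive the doublings. -/
def height (d : ℕ) (b : ZMod W → Bool) (t : ZMod W) : ZMod (2 ^ d) :=
  Nat.ofBits fun i : Fin d => b (t - 1 - (i : ℕ))

lemma height_add_one (b : ZMod W → Bool) (t : ZMod W) :
    height d b (t + 1) = 2 * height d b t + if b t then 1 else 0 := by
  have h := natCast_ofBits_succ fun i : Fin (d + 1) => b (t - (i : ℕ))
  rw [Nat.ofBits_succ] at h
  push_cast [Function.comp_def] at h
  simpa [height, Function.comp_def, ← sub_sub, add_comm, sub_right_comm, Bool.toNat,
    Bool.cond_eq_ite] using h.symm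

lemma two_pow_eq_zero (d : ℕ) : (2 : ZMod (2 ^ d)) ^ d = 0 := by
  exact_mod_cast ZMod.natCast_self (2 ^ d)

lemma eq_zero_of_forall_add_one_eq_two_mul {f : ZMod W → ZMod (2 ^ d)}
    (hf : ∀ t, f (t + 1) = 2 * f t) : f = 0 := by
  have hiter (t : ZMod W) (n : ℕ) : f (t + n) = 2 ^ n * f t := by
    induction n with
    | zero => simp
    | succ n ih => rw [Nat.cast_succ, ← add_assoc, hf, ih, pow_succ', mul_assoc]
  funext t
  simpa [two_pow_eq_zero] using hiter (t - d) d

namespace BCycle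

lemma c_eq_height (γ : BCycle (2 ^ d) W) : γ.c = height d γ.b := by
  refine sub_eq_zero.mp <| eq_zero_of_forall_add_one_eq_two_mul fun t => ?_
  simp only [Pi.sub_apply, γ.closed, height_add_one]
  ring

/-- A cycle is determined by its choice bits, and every bit sequence occurs. -/
def equivBits (d W : ℕ) : BCycle (2 ^ d) W ≃ (ZMod W → Bool) where
  toFun γ := γ.b
  invFun b := ⟨height d b, b, height_add_one b⟩
  left_inv := by
    rintro ⟨c, b, h⟩
    obtain rfl : c = height d b := c_eq_height ⟨c, b, h⟩
    rfl
  right_inv _ := rfl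

instance [NeZero W] : Fintype (BCycle (2 ^ d) W) := .ofEquiv _ (equivBits d W).symm

lemma card_eq_two_pow (d W : ℕ) [NeZero W] : Fintype.card (BCycle (2 ^ d) W) = 2 ^ W := by
  simp [Fintype.card_congr (equivBits d W), ZMod.card]

lemma mem_runEnds_agreement [NeZero W] {γ γ' : BCycle (2 ^ d) W} {t : ZMod W}
    (hc : γ.c t = γ'.c t) (hb : γ.b t = γ'.b t) : t ∈ runEnds d (agreement γ.b γ'.b) := by
  rw [c_eq_height, c_eq_height] at hc
  have hbits := congrFun (natCast_ofBits_injective d hc)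
  simp only [mem_runEnds, agreement, mem_filter_univ]
  rintro (_ | i) hi
  · simpa using hb
  · simpa [sub_sub, add_comm] using hbits ⟨i, hi⟩

section Edges

variable {H : ℕ} [NeZero W]

/-- The edges traversed by a cycle, each given by its source vertex and choice bit. -/
def edges (γ : BCycle H W) : Finset ((ZMod H × ZMod W) × Bool) :=
  univ.image fun t => ((γ.c t, t), γ.b t)

lemma card_edges (γ : BCycle H W) : #γ.edges = W := by
  rw [edges, card_image_of_injective, card_univ, ZMod.card]
  exact fun t t' h => congrArg (·.1.2) h

lemma forall_mem_edges_iff_cycleOpen {γ : BCycle H W} {η : (ZMod H × ZMod W) × Bool → Bool} :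
    (∀ e ∈ γ.edges, η e = true) ↔ cycleOpen η γ := by
  simp [edges, cycleOpen]

end Edges

lemma natCard_cycleOpen_eq_numOpen [NeZero W] (η : (ZMod (2 ^ d) × ZMod W) × Bool → Bool) :
    Nat.card {γ : BCycle (2 ^ d) W // cycleOpen η γ} = numOpen edges η := by
  simp only [numOpen, forall_mem_edges_iff_cycleOpen]

lemma card_edges_inter_edges_le [NeZero W] (γ γ' : BCycle (2 ^ d) W) :
    #(γ.edges ∩ γ'.edges) ≤ #(runEnds d (agreement γ.b γ'.b)) := by
  have himage : γ.edges ∩ γ'.edges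
      ⊆ (runEnds d (agreement γ.b γ'.b)).image fun t => ((γ.c t, t), γ.b t) := by
    intro e he
    obtain ⟨⟨t, rfl⟩, t', ht'⟩ : (∃ t, ((γ.c t, t), γ.b t) = e) ∧
        ∃ t', ((γ'.c t', t'), γ'.b t') = e := by simpa [edges] using he
    obtain ⟨⟨hc, rfl⟩, hb⟩ : (γ'.c t' = γ.c t ∧ t' = t) ∧ γ'.b t' = γ.b t := by simpa using ht'
    exact mem_image_of_mem _ (mem_runEnds_agreement hc.symm hb.symm)
  exact (card_le_card himage).trans card_image_le

lemma sum_two_pow_card_edges_inter_le [NeZero W] {y : ℝ} (hy : 2 ^ (d + 1) * y ^ 2 = 1)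
    (γ : BCycle (2 ^ d) W) :
    ∑ γ' : BCycle (2 ^ d) W, (2 : ℝ) ^ #(γ.edges ∩ γ'.edges)
      ≤ 2 ^ W * ((1 + y) ^ W + (1 - y) ^ W) := by
  calc ∑ γ' : BCycle (2 ^ d) W, (2 : ℝ) ^ #(γ.edges ∩ γ'.edges)
      ≤ ∑ γ' : BCycle (2 ^ d) W, (2 : ℝ) ^ #(runEnds d (agreement γ.b γ'.b)) := by
        gcongr with γ'
        · exact one_le_two
        · exact card_edges_inter_edges_le γ γ'
    _ ≤ ∑ A : Finset (ZMod W), (2 : ℝ) ^ #(runEnds d A) :=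
        sum_comp_le_sum_of_injective (f := fun A => (2 : ℝ) ^ #(runEnds d A))
          ((agreement_injective γ.b).comp (equivBits d W).injective) fun A => by positivity
    _ ≤ 2 ^ W * ((1 + y) ^ W + (1 - y) ^ W) := sum_two_pow_card_runEnds_le d W hy

end BCycle

end Cycles

lemma one_add_pow_add_one_sub_pow_le_exp {y : ℝ} (hy₀ : 0 ≤ y) (hy₁ : y ≤ 1) (n : ℕ) :
    (1 + y) ^ n + (1 - y) ^ n ≤ Real.exp (n * y) + Real.exp (-(n * y)) := by
  rw [← mul_neg, Real.exp_nat_mul, Real.exp_nat_mul]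
  gcongr
  · linarith [Real.add_one_le_exp y]
  · exact Real.one_sub_le_exp_neg y

lemma expect_numOpen_edges_sq_le (d W : ℕ) [NeZero W] :
    𝔼 η, (numOpen (BCycle.edges (H := 2 ^ d) (W := W)) η : ℝ) ^ 2
      ≤ Real.exp (W / √(2 * 2 ^ d)) + Real.exp (-(W / √(2 * 2 ^ d))) := by
  have hone : 1 ≤ √(2 * 2 ^ d : ℝ) := by
    rw [← pow_succ', Real.one_le_sqrt]
    exact one_le_pow₀ one_le_two
  have hy : (2 : ℝ) ^ (d + 1) * (1 / √(2 * 2 ^ d)) ^ 2 = 1 := by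
    rw [div_pow, Real.sq_sqrt (by positivity), pow_succ']
    field_simp
  have hexp := one_add_pow_add_one_sub_pow_le_exp (y := 1 / √(2 * 2 ^ d)) (by positivity)
    ((div_le_one (by positivity)).mpr hone) W
  rw [mul_one_div] at hexp
  refine (expect_numOpen_sq_le (BCycle.card_eq_two_pow d W) BCycle.card_edges ?_).trans hexp
  exact BCycle.sum_two_pow_card_edges_inter_le hy

theorem statement16_general (d H W : ℕ) (hH : H = 2 ^ d)
    [NeZero H] [NeZero W] :
    (∑ η : (ZMod H × ZMod W) × Bool → Bool,
          (Nat.card {γ : BCycle H W // cycleOpen η γ} : ℝ) ^ 2)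
        / Fintype.card ((ZMod H × ZMod W) × Bool → Bool)
      ≤ Real.exp (W / Real.sqrt (2 * H)) + Real.exp (-(W / Real.sqrt (2 * H)))
    ∧ (Nat.card {η : (ZMod H × ZMod W) × Bool → Bool //
          0 < Nat.card {γ : BCycle H W // cycleOpen η γ}} : ℝ)
        / Fintype.card ((ZMod H × ZMod W) × Bool → Bool)
      ≥ 1 / (Real.exp (W / Real.sqrt (2 * H)) + Real.exp (-(W / Real.sqrt (2 * H)))) := by
  subst hH
  simp only [BCycle.natCard_cycleOpen_eq_numOpen]
  push_cast
  set M := Real.exp (W / √(2 * 2 ^ d)) + Real.exp (-(W / √(2 * 2 ^ d)))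
  set N := numOpen (BCycle.edges (H := 2 ^ d) (W := W))
  have hmean : 𝔼 η, (N η : ℝ) = 1 :=
    expect_numOpen_eq_one (BCycle.card_eq_two_pow d W) BCycle.card_edges
  have hsq : 𝔼 η, (N η : ℝ) ^ 2 ≤ M := expect_numOpen_edges_sq_le d W
  refine ⟨by rwa [← Fintype.expect_eq_sum_div_card], ?_⟩
  have hsecond := sq_expect_le_expect_sq_mul_card_ne_zero fun η => (N η : ℝ)
  simp only [hmean, one_pow, Nat.cast_ne_zero, ← Nat.pos_iff_ne_zero] at hsecond
  rw [ge_iff_le, div_le_iff₀' (by positivity)]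
  exact hsecond.trans (by gcongr)

/-- Let `H = 2^d`, `W ≥ d`, and let `N_{H,W}` be the number of
directed cycles of length exactly `W` in `Ω_{H,W}` all of whose edges are open
in the monotone ensemble.  Then
`E[N²] ≤ exp(W/√(2H)) + exp(−W/√(2H))`, and consequently
`Pr[N > 0] ≥ 1/(exp(W/√(2H)) + exp(−W/√(2H)))`. -/
theorem statement16 (d H W : ℕ) (hH : H = 2 ^ d) (hW : d ≤ W)
    [NeZero H] [NeZero W] :
    (∑ η : (ZMod H × ZMod W) × Bool → Bool,
          (Nat.card {γ : BCycle H W // cycleOpen η γ} : ℝ) ^ 2)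
        / Fintype.card ((ZMod H × ZMod W) × Bool → Bool)
      ≤ Real.exp (W / Real.sqrt (2 * H)) + Real.exp (-(W / Real.sqrt (2 * H)))
    ∧ (Nat.card {η : (ZMod H × ZMod W) × Bool → Bool //
          0 < Nat.card {γ : BCycle H W // cycleOpen η γ}} : ℝ)
        / Fintype.card ((ZMod H × ZMod W) × Bool → Bool)
      ≥ 1 / (Real.exp (W / Real.sqrt (2 * H)) + Real.exp (-(W / Real.sqrt (2 * H)))) :=
  statement16_general d H W hH
end

section
/- Let f : {−1,1}^n → {−1,1} and let A be a randomized decision-tree algorithm such that every tree in the support of A computes f exactly on every input, with revealment δ. Then ∑_{i=1}^n f̂({i}) ≤ √(n·δ). -/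
/-- A deterministic decision tree on `n` bits: a leaf outputs a Boolean value, an
internal node queries a bit and branches on its value. -/
inductive DTree (n : ℕ) : Type
  | leaf : Bool → DTree n
  | node : Fin n → DTree n → DTree n → DTree n

namespace DTree

/-- The output of a decision tree on input `x`. -/
def eval {n : ℕ} : DTree n → (Fin n → Bool) → Bool
  | .leaf b, _ => b
  | .node i t0 t1, x => if x i then t1.eval x else t0.eval x

/-- Whether the decision tree reads bit `j` when run on input `x`. -/
def readsBit {n : ℕ} : DTree n → (Fin n → Bool) → Fin n → Bool
  | .leaf _, _, _ => false
  | .node i t0 t1, x, j =>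
      (i == j) || (if x i then t1.readsBit x j else t0.readsBit x j)

end DTree

/-- A randomized decision-tree algorithm: a (finitely supported) probability
distribution over deterministic decision trees. -/
structure RandAlg (n : ℕ) where
  m : ℕ
  tree : Fin m → DTree n
  w : Fin m → ℝ
  w_nonneg : ∀ r, 0 ≤ w r
  w_sum : ∑ r, w r = 1

/-- `readProb A i` is the probability δ_i that bit `i` is read, over a uniformly
random input and the internal randomness of the algorithm. -/
noncomputable def readProb {n : ℕ} (A : RandAlg n) (i : Fin n) : ℝ :=
  (∑ r, ∑ x : Fin n → Bool, if (A.tree r).readsBit x i then A.w r else 0) / 2 ^ n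

/-- The probability that the algorithm's output differs from `f`, over a uniformly
random input and the internal randomness of the algorithm. -/
noncomputable def errProb {n : ℕ} (A : RandAlg n) (f : (Fin n → Bool) → Bool) : ℝ :=
  (∑ r, ∑ x : Fin n → Bool, if (A.tree r).eval x ≠ f x then A.w r else 0) / 2 ^ n

/-- A Boolean function is balanced if it takes the value `true` on exactly half
of all inputs. -/
def balanced {n : ℕ} (f : (Fin n → Bool) → Bool) : Prop :=
  2 * Nat.card {x : Fin n → Bool // f x = true} = 2 ^ n

/-- A Boolean function is monotone if it is order preserving coordinatewise. -/
def monotoneBF {n : ℕ} (f : (Fin n → Bool) → Bool) : Prop :=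
  ∀ x y : Fin n → Bool, (∀ i, x i ≤ y i) → f x ≤ f y

/-- The ±1 encoding of a Boolean value. -/
noncomputable def pm (b : Bool) : ℝ := if b then 1 else -1

/-- The variance of the ±1-valued function corresponding to `f`, for a uniformly
random input. -/
noncomputable def pmVar {n : ℕ} (f : (Fin n → Bool) → Bool) : ℝ :=
  (∑ x : Fin n → Bool, pm (f x) ^ 2) / 2 ^ n
    - ((∑ x : Fin n → Bool, pm (f x)) / 2 ^ n) ^ 2

/-- The Fourier coefficient `f̂(S) = E[f(x)·∏_{i∈S} x_i]` of a real-valued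
function of `n` ±1-encoded bits, for a uniformly random input. -/
noncomputable def fourierBF {n : ℕ} (f : (Fin n → Bool) → ℝ) (S : Finset (Fin n)) :
    ℝ :=
  (∑ x : Fin n → Bool, f x * ∏ i ∈ S, pm (x i)) / 2 ^ n

/-!
Let `S(x)` be the sum of the bits that a tree computing `f` reads on `x`. Flipping an unread bit
does not change the output, so the unread bits contribute nothing to `∑ i, f̂({i})`, and
`∑ i, f̂({i}) = E[f S] ≤ √E[S²]` by Cauchy–Schwarz. The walk `S` has orthogonal increments: of two
read bits, the one read second is still uniform when it is read. Hence `E[S²]` is the expected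
number of bits read, which averages over the trees of the algorithm to `∑ i, δ_i ≤ n δ`.
-/

theorem pm_not (b : Bool) : pm (!b) = -pm b := by cases b <;> simp [pm]

theorem pm_mul_self (b : Bool) : pm b * pm b = 1 := by cases b <;> simp [pm]

theorem sum_mul_pm_eq_zero_of_dependsOn {ι : Type*} [Fintype ι] [DecidableEq ι]
    {g : (ι → Bool) → ℝ} {j : ι} (hg : DependsOn g {j}ᶜ) : ∑ x, g x * pm (x j) = 0 := by
  refine Finset.sum_involution (fun x _ => Function.update x j (!x j)) ?_ ?_
    (fun x _ => Finset.mem_univ _) (fun x _ => by simp)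
  · intro x _
    have hflip : g (Function.update x j (!x j)) = g x :=
      hg fun k hk => Function.update_of_ne hk _ _
    rw [hflip, Function.update_self, pm_not]
    ring
  · intro x _ _ hfix
    simpa using congrFun hfix j

namespace DTree

variable {n : ℕ} (t : DTree n)

theorem eval_congr {x y : Fin n → Bool} (h : ∀ k, t.readsBit x k → x k = y k) :
    t.eval x = t.eval y := by
  induction t with
  | leaf b => rfl
  | node k t₀ t₁ ih₀ ih₁ =>
    have hk : x k = y k := h k (by simp [readsBit])
    cases hx : x k <;> simp_all [readsBit, eval]

/-- Whether bit `j` is read is settled before the value of bit `j` is seen. -/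
theorem dependsOn_readsBit (j : Fin n) : DependsOn (fun x => t.readsBit x j) {j}ᶜ := by
  intro x y hxy
  induction t with
  | leaf b => rfl
  | node k t₀ t₁ ih₀ ih₁ =>
    by_cases hkj : k = j
    · simp [readsBit, hkj]
    · simp_all [readsBit, hxy k hkj]

/-- Whether, on input `x`, the tree reads both `i` and `j`, and reads `i` for the first time before
it reads `j`. -/
def readsBefore : DTree n → (Fin n → Bool) → Fin n → Fin n → Bool
  | .leaf _, _, _, _ => false
  | .node k t₀ t₁, x, i, j =>
      if k = j then false
      else if k = i then (node k t₀ t₁).readsBit x j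
      else if x k then t₁.readsBefore x i j else t₀.readsBefore x i j

theorem dependsOn_readsBefore (i j : Fin n) :
    DependsOn (fun x => t.readsBefore x i j) {j}ᶜ := by
  intro x y hxy
  induction t with
  | leaf b => rfl
  | node k t₀ t₁ ih₀ ih₁ =>
    have hreads := (node k t₀ t₁).dependsOn_readsBit j hxy
    by_cases hkj : k = j
    · simp [readsBefore, hkj]
    · simp only [readsBefore, hkj, if_false, hreads, hxy k hkj, ih₀, ih₁]

theorem toNat_readsBit_and_readsBit (x : Fin n → Bool) {i j : Fin n} (hij : i ≠ j) :
    (t.readsBit x i && t.readsBit x j).toNat =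
      (t.readsBefore x i j).toNat + (t.readsBefore x j i).toNat := by
  induction t with
  | leaf b => rfl
  | node k t₀ t₁ ih₀ ih₁ =>
    by_cases hki : k = i
    · subst hki
      simp [readsBit, readsBefore, hij]
    · by_cases hkj : k = j
      · subst hkj
        simp [readsBit, readsBefore, hij.symm]
      · cases hx : x k <;>
          simpa [readsBit, readsBefore, hki, hkj, hx, beq_false_of_ne hki, beq_false_of_ne hkj]

/-- The `±1` value of bit `i` if the tree reads it on input `x`, and `0` otherwise. Summed over `i`,
this is the position of the random walk driven by the bits read. -/
noncomputable def readSign (x : Fin n → Bool) (i : Fin n) : ℝ :=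
  if t.readsBit x i then pm (x i) else 0

theorem readSign_mul_self (x : Fin n → Bool) (i : Fin n) :
    t.readSign x i * t.readSign x i = if t.readsBit x i then 1 else 0 := by
  simp [readSign, pm_mul_self]

theorem sum_readsBefore_mul_pm_mul_pm {i j : Fin n} (hij : i ≠ j) :
    ∑ x, (t.readsBefore x i j).toNat * pm (x i) * pm (x j) = 0 := by
  refine sum_mul_pm_eq_zero_of_dependsOn fun x y hxy => ?_
  have hbefore : t.readsBefore x i j = t.readsBefore y i j := t.dependsOn_readsBefore i j hxy
  simp only [hbefore, hxy i hij]

theorem sum_readSign_mul_readSign_of_ne {i j : Fin n} (hij : i ≠ j) :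
    ∑ x, t.readSign x i * t.readSign x j = 0 := by
  have split_order (x : Fin n → Bool) : t.readSign x i * t.readSign x j =
      (t.readsBefore x i j).toNat * pm (x i) * pm (x j) +
        (t.readsBefore x j i).toNat * pm (x j) * pm (x i) := by
    calc t.readSign x i * t.readSign x j
        = (t.readsBit x i && t.readsBit x j).toNat * (pm (x i) * pm (x j)) := by
          cases hi : t.readsBit x i <;> cases hj : t.readsBit x j <;> simp [readSign, hi, hj]
      _ = _ := by
          rw [t.toNat_readsBit_and_readsBit x hij]
          push_cast
          ring
  simp only [split_order, Finset.sum_add_distrib, t.sum_readsBefore_mul_pm_mul_pm hij,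
    t.sum_readsBefore_mul_pm_mul_pm hij.symm, add_zero]

theorem sum_sq_sum_readSign :
    ∑ x, (∑ i, t.readSign x i) ^ 2 = ∑ i, ∑ x, if t.readsBit x i then (1 : ℝ) else 0 := by
  calc ∑ x, (∑ i, t.readSign x i) ^ 2
      = ∑ i, ∑ j, ∑ x, t.readSign x i * t.readSign x j := by
        simp only [sq, Finset.sum_mul_sum]
        rw [Finset.sum_comm]
        exact Finset.sum_congr rfl fun i _ => Finset.sum_comm
    _ = ∑ i, ∑ x, t.readSign x i * t.readSign x i :=
        Finset.sum_congr rfl fun i _ => Fintype.sum_eq_single i fun j hj =>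
          t.sum_readSign_mul_readSign_of_ne hj.symm
    _ = _ := by simp only [readSign_mul_self]

theorem sum_pm_eval_mul_pm (i : Fin n) :
    ∑ x, pm (t.eval x) * pm (x i) = ∑ x, pm (t.eval x) * t.readSign x i := by
  let unreadOutput (x : Fin n → Bool) : ℝ := if t.readsBit x i then 0 else pm (t.eval x)
  have unreadOutput_dependsOn : DependsOn unreadOutput {i}ᶜ := by
    intro x y hxy
    have hreads : t.readsBit x i = t.readsBit y i := t.dependsOn_readsBit i hxy
    cases hx : t.readsBit x i with
    | true => simp [unreadOutput, ← hreads, hx]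
    | false =>
      have heval : t.eval x = t.eval y :=
        t.eval_congr fun k hk => hxy k fun hki => by simp_all
      simp [unreadOutput, ← hreads, hx, heval]
  have split_output (x : Fin n → Bool) : pm (t.eval x) * pm (x i) =
      pm (t.eval x) * t.readSign x i + unreadOutput x * pm (x i) := by
    cases hx : t.readsBit x i <;> simp [readSign, unreadOutput, hx]
  simp only [split_output, Finset.sum_add_distrib,
    sum_mul_pm_eq_zero_of_dependsOn unreadOutput_dependsOn, add_zero]

/-- The probability that a deterministic tree reads bit `i` on a uniformly random input. -/
noncomputable def readProb (i : Fin n) : ℝ :=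
  (∑ x, if t.readsBit x i then 1 else 0) / 2 ^ n

theorem sq_sum_fourierBF_singleton_le_sum_readProb :
    (∑ i, fourierBF (fun x => pm (t.eval x)) {i}) ^ 2 ≤ ∑ i, t.readProb i := by
  have fourier_eq : ∑ i, fourierBF (fun x => pm (t.eval x)) {i} =
      (∑ x, pm (t.eval x) * ∑ i, t.readSign x i) / 2 ^ n := by
    simp only [fourierBF, Finset.prod_singleton, ← Finset.sum_div, sum_pm_eval_mul_pm,
      Finset.mul_sum]
    rw [Finset.sum_comm]
  have sum_pm_sq : ∑ x, pm (t.eval x) ^ 2 = 2 ^ n := by simp [sq, pm_mul_self]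
  calc (∑ i, fourierBF (fun x => pm (t.eval x)) {i}) ^ 2
      = (∑ x, pm (t.eval x) * ∑ i, t.readSign x i) ^ 2 / (2 ^ n) ^ 2 := by
        rw [fourier_eq, div_pow]
    _ ≤ ((∑ x, pm (t.eval x) ^ 2) * ∑ x, (∑ i, t.readSign x i) ^ 2) / (2 ^ n) ^ 2 := by
        gcongr
        exact Finset.sum_mul_sq_le_sq_mul_sq _ _ _
    _ = (∑ x, (∑ i, t.readSign x i) ^ 2) / 2 ^ n := by
        rw [sum_pm_sq]
        field_simp
    _ = ∑ i, t.readProb i := by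
        simp only [sum_sq_sum_readSign, readProb, Finset.sum_div]

end DTree

namespace RandAlg

variable {n : ℕ} (A : RandAlg n)

theorem readProb_eq_sum (i : Fin n) : readProb A i = ∑ r, A.w r * (A.tree r).readProb i := by
  simp only [readProb, DTree.readProb, ← mul_div_assoc, ← Finset.sum_div, Finset.mul_sum,
    mul_ite, mul_one, mul_zero]

theorem sq_sum_fourierBF_singleton_le_sum_readProb {f : (Fin n → Bool) → Bool}
    (hf : ∀ r x, (A.tree r).eval x = f x) :
    (∑ i, fourierBF (fun x => pm (f x)) {i}) ^ 2 ≤ ∑ i, readProb A i := by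
  have tree_bound (r : Fin A.m) :
      (∑ i, fourierBF (fun x => pm (f x)) {i}) ^ 2 ≤ ∑ i, (A.tree r).readProb i := by
    simpa only [hf] using (A.tree r).sq_sum_fourierBF_singleton_le_sum_readProb
  calc (∑ i, fourierBF (fun x => pm (f x)) {i}) ^ 2
      = ∑ r, A.w r * (∑ i, fourierBF (fun x => pm (f x)) {i}) ^ 2 := by
        rw [← Finset.sum_mul, A.w_sum, one_mul]
    _ ≤ ∑ r, A.w r * ∑ i, (A.tree r).readProb i :=
        Finset.sum_le_sum fun r _ => mul_le_mul_of_nonneg_left (tree_bound r) (A.w_nonneg r)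
    _ = ∑ i, readProb A i := by
        simp only [readProb_eq_sum, Finset.mul_sum]
        rw [Finset.sum_comm]

end RandAlg

/-- If `A` is a randomized decision-tree algorithm computing
the Boolean function `f` exactly on every input, with revealment `δ` (every bit
is read with probability at most `δ`), then `∑_{i=1}^n f̂({i}) ≤ √(n·δ)`. -/
theorem statement17 (n : ℕ) (f : (Fin n → Bool) → Bool) (A : RandAlg n)
    (hcomp : ∀ r x, (A.tree r).eval x = f x)
    (δ : ℝ) (hδ : ∀ i, readProb A i ≤ δ) :
    ∑ i : Fin n, fourierBF (fun x => pm (f x)) {i} ≤ Real.sqrt (n * δ) := by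
  refine Real.le_sqrt_of_sq_le ?_
  calc (∑ i : Fin n, fourierBF (fun x => pm (f x)) {i}) ^ 2
      ≤ ∑ i, readProb A i := A.sq_sum_fourierBF_singleton_le_sum_readProb hcomp
    _ ≤ ∑ _i : Fin n, δ := Finset.sum_le_sum fun i _ => hδ i
    _ = n * δ := by simp
end

section
/- Let f : {−1,1}^n → {−1,1} and let A be a randomized decision-tree algorithm such that every tree in the support of A computes f exactly on every input, with read probabilities δ_1,…,δ_n on a uniform random input. Then Var(f) ≤ ∑_{i=1}^n δ_i · I_i(f). -/
/-- The influence `I_i(f)`: the probability that flipping coordinate `i` of a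
uniformly random input changes the value of `f`. -/
noncomputable def influence {n : ℕ} (f : (Fin n → Bool) → Bool) (i : Fin n) : ℝ :=
  (Nat.card {x : Fin n → Bool // f x ≠ f (Function.update x i (!x i))} : ℝ) / 2 ^ n

/-!
Let `f` be the `±1`-valued output of a decision tree whose root queries bit `i`, let `g` be any real
function on the cube, and write `f_b`, `g_b` for the restrictions to `x_i = b`. Averaging over `b`,
`Cov(f, g) = 𝔼_b Cov(f_b, g) + 𝔼_b 𝔼_x f_b (g_b - g)`, and the last term is at most the influence of
`i` on `g` because `|f_b| ≤ 1`. It is essential that `g` itself is not restricted in `Cov(f_b, g)`: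
iterating down the tree, every query of bit `i` costs the *unconditional* influence of `i` on `g`,
which adds up to the probability of reading `i` times that influence. A tree may query a bit again
along a path; such a query is free, so the induction fixes the bits already read.
-/

open scoped BigOperators
open Function

section Cube

variable {ι : Type*} [DecidableEq ι]

lemma piecewise_update_right_eq_insert {β : Type*} {S : Finset ι} {i : ι} (hi : i ∉ S)
    (z x : ι → β) (b : β) :
    S.piecewise z (update x i b) = (insert i S).piecewise (update z i b) x := by
  rw [Finset.piecewise_insert, update_self, Finset.update_piecewise, update_idem,
    ← Finset.update_piecewise, S.update_piecewise_of_notMem z x hi]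

lemma apply_update_true_add_apply_update_false {M : Type*} [AddCommMagma M] (F : (ι → Bool) → M)
    (x : ι → Bool) (i : ι) :
    F (update x i true) + F (update x i false) = F x + F (update x i (!x i)) := by
  have hself := update_eq_self i x
  cases hx : x i <;> rw [hx] at hself <;> simp [hself, add_comm]

variable [Fintype ι]

/-- The covariance of two real functions of a uniformly random element of a finite type. -/
noncomputable def uniformCov {Ω : Type*} [Fintype Ω] (f g : Ω → ℝ) : ℝ :=
  𝔼 x, f x * g x - (𝔼 x, f x) * 𝔼 x, g x

/-- The `L¹` influence of coordinate `i` on a real function `g` of uniform random bits: the mean of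
`|D_i g|`, where `D_i g` is half the change of `g` under flipping bit `i`. The factor `1 / 2` makes
it agree with `influence` on `±1`-valued functions. -/
noncomputable def l1Influence (g : (ι → Bool) → ℝ) (i : ι) : ℝ :=
  𝔼 x, |g (update x i (!x i)) - g x| / 2

lemma expect_update_not {M : Type*} [AddCommMonoid M] [Module ℚ≥0 M] (F : (ι → Bool) → M)
    (i : ι) :
    𝔼 x, F (update x i (!x i)) = 𝔼 x, F x := by
  have hinv : Involutive fun x : ι → Bool => update x i (!x i) := fun x => by simp
  exact Fintype.expect_equiv hinv.toPerm _ _ fun _ => rfl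

lemma expect_bool (F : Bool → ℝ) : 𝔼 b, F b = (F true + F false) / 2 := by
  rw [Fintype.expect_eq_sum_div_card, Fintype.sum_bool, Fintype.card_bool, Nat.cast_ofNat]

lemma expect_bool_expect_update (F : (ι → Bool) → ℝ) (i : ι) :
    𝔼 b, 𝔼 x, F (update x i b) = 𝔼 x, F x := by
  rw [expect_bool, ← Finset.expect_add_distrib]
  simp only [apply_update_true_add_apply_update_false]
  rw [Finset.expect_add_distrib, expect_update_not]
  ring

lemma expect_bool_expect_abs_update_sub (g : (ι → Bool) → ℝ) (i : ι) :
    𝔼 b, 𝔼 x, |g (update x i b) - g x| = l1Influence g i := by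
  have hpair (x : ι → Bool) : |g (update x i true) - g x| + |g (update x i false) - g x| =
      |g (update x i (!x i)) - g x| := by
    simpa using apply_update_true_add_apply_update_false (fun y => |g y - g x|) x i
  rw [expect_bool, ← Finset.expect_add_distrib, l1Influence, Finset.expect_div]
  simp only [hpair]

lemma uniformCov_eq_expect_update (f g : (ι → Bool) → ℝ) (i : ι) :
    uniformCov f g = 𝔼 b, uniformCov (fun x => f (update x i b)) g +
      𝔼 b, 𝔼 x, f (update x i b) * (g (update x i b) - g x) := by
  rw [uniformCov, ← expect_bool_expect_update (fun x => f x * g x) i,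
    ← expect_bool_expect_update f i]
  simp only [uniformCov, mul_sub, Finset.expect_sub_distrib, Finset.expect_mul]
  ring

lemma uniformCov_le_expect_update_add_l1Influence {f : (ι → Bool) → ℝ} (hf : ∀ x, |f x| ≤ 1)
    (g : (ι → Bool) → ℝ) (i : ι) :
    uniformCov f g ≤ 𝔼 b, uniformCov (fun x => f (update x i b)) g + l1Influence g i := by
  rw [uniformCov_eq_expect_update f g i, ← expect_bool_expect_abs_update_sub]
  gcongr with b _ x _
  calc f (update x i b) * (g (update x i b) - g x)
      ≤ |f (update x i b)| * |g (update x i b) - g x| := by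
        rw [← abs_mul]
        exact le_abs_self _
    _ ≤ |g (update x i b) - g x| := mul_le_of_le_one_left (abs_nonneg _) (hf _)

end Cube

lemma abs_pm (b : Bool) : |pm b| = 1 := by
  cases b <;> simp [pm]

lemma abs_pm_sub_pm (a b : Bool) : |pm a - pm b| / 2 = if b ≠ a then 1 else 0 := by
  cases a <;> cases b <;> norm_num [pm]

section BooleanFunctions

variable {n : ℕ}

lemma expect_cube_eq_sum_div (F : (Fin n → Bool) → ℝ) : 𝔼 x, F x = (∑ x, F x) / 2 ^ n := by
  simp [Fintype.expect_eq_sum_div_card]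

lemma pmVar_eq_uniformCov (f : (Fin n → Bool) → Bool) :
    pmVar f = uniformCov (fun x => pm (f x)) fun x => pm (f x) := by
  simp only [pmVar, uniformCov, expect_cube_eq_sum_div, sq]

lemma l1Influence_pm (f : (Fin n → Bool) → Bool) (i : Fin n) :
    l1Influence (fun x => pm (f x)) i = influence f i := by
  simp only [l1Influence, abs_pm_sub_pm, expect_cube_eq_sum_div, influence, Finset.sum_boole,
    Nat.card_eq_fintype_card, Fintype.card_subtype]

end BooleanFunctions

namespace DTree

variable {n : ℕ}

/-- The probability that the tree, run on a uniformly random input whose bits in `S` have been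
overwritten by those of `z`, reads bit `j` and `j ∉ S`. It is the cost of `j` in a run for which
the bits in `S` are already known; with `S = ∅` it is the read probability of `j`. -/
noncomputable def newReadProb (t : DTree n) (S : Finset (Fin n)) (z : Fin n → Bool)
    (j : Fin n) : ℝ :=
  𝔼 x, if j ∉ S ∧ t.readsBit (S.piecewise z x) j then 1 else 0

lemma eval_node (i : Fin n) (t₀ t₁ : DTree n) (x : Fin n → Bool) :
    (node i t₀ t₁).eval x = (cond (x i) t₁ t₀).eval x := by
  cases h : x i <;> simp [eval, h]

lemma readsBit_node (i : Fin n) (t₀ t₁ : DTree n) (x : Fin n → Bool) (j : Fin n) :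
    (node i t₀ t₁).readsBit x j = (i == j || (cond (x i) t₁ t₀).readsBit x j) := by
  cases h : x i <;> simp [readsBit, h]

lemma newReadProb_node_of_mem {S : Finset (Fin n)} {i : Fin n} (hi : i ∈ S) (t₀ t₁ : DTree n)
    (z : Fin n → Bool) (j : Fin n) :
    (node i t₀ t₁).newReadProb S z j = (cond (z i) t₁ t₀).newReadProb S z j := by
  refine Finset.expect_congr rfl fun x _ => if_congr (and_congr_right fun hj => ?_) rfl rfl
  simp [readsBit_node, hi, ne_of_mem_of_not_mem hi hj]

lemma newReadProb_node_of_notMem {S : Finset (Fin n)} {i : Fin n} (hi : i ∉ S) (t₀ t₁ : DTree n)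
    (z : Fin n → Bool) (j : Fin n) :
    (node i t₀ t₁).newReadProb S z j = (if i = j then 1 else 0) +
      𝔼 b, (cond b t₁ t₀).newReadProb (insert i S) (update z i b) j := by
  rw [newReadProb, ← expect_bool_expect_update _ i]
  simp only [newReadProb, piecewise_update_right_eq_insert hi, readsBit_node]
  rcases eq_or_ne i j with rfl | hij
  · simp [hi]
  · simp [hij, hij.symm]

lemma uniformCov_eval_le_sum_newReadProb_mul (t : DTree n) (S : Finset (Fin n))
    (z : Fin n → Bool) (g : (Fin n → Bool) → ℝ) :
    uniformCov (fun x => pm (t.eval (S.piecewise z x))) g ≤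
      ∑ j, t.newReadProb S z j * l1Influence g j := by
  induction t generalizing S z with
  | leaf c => simp [uniformCov, newReadProb, eval, readsBit, Finset.mul_expect]
  | node i t₀ t₁ ih₀ ih₁ =>
    have ih (b : Bool) (S : Finset (Fin n)) (z : Fin n → Bool) :
        uniformCov (fun x => pm ((cond b t₁ t₀).eval (S.piecewise z x))) g ≤
          ∑ j, (cond b t₁ t₀).newReadProb S z j * l1Influence g j := by
      cases b
      exacts [ih₀ S z, ih₁ S z]
    by_cases hi : i ∈ S
    · simpa [eval_node, newReadProb_node_of_mem hi, hi] using ih (z i) S z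
    · calc uniformCov (fun x => pm ((node i t₀ t₁).eval (S.piecewise z x))) g
          ≤ 𝔼 b, uniformCov (fun x => pm ((node i t₀ t₁).eval (S.piecewise z (update x i b)))) g +
              l1Influence g i :=
            uniformCov_le_expect_update_add_l1Influence (fun x => (abs_pm _).le) g i
        _ = 𝔼 b, uniformCov (fun x => pm ((cond b t₁ t₀).eval
              ((insert i S).piecewise (update z i b) x))) g + l1Influence g i := by
            simp [eval_node, piecewise_update_right_eq_insert hi]
        _ ≤ 𝔼 b, ∑ j, (cond b t₁ t₀).newReadProb (insert i S) (update z i b) j *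
              l1Influence g j + l1Influence g i := by
            gcongr with b
            exact ih b _ _
        _ = ∑ j, (node i t₀ t₁).newReadProb S z j * l1Influence g j := by
            simp [newReadProb_node_of_notMem hi, add_mul, Finset.sum_add_distrib,
              Finset.expect_sum_comm, Finset.expect_mul, add_comm]

end DTree

lemma readProb_eq_sum_mul_newReadProb {n : ℕ} (A : RandAlg n) (z : Fin n → Bool) (i : Fin n) :
    readProb A i = ∑ r, A.w r * (A.tree r).newReadProb ∅ z i := by
  simp [readProb, DTree.newReadProb, expect_cube_eq_sum_div, Finset.sum_div, Finset.mul_sum,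
    ← mul_div_assoc, -Finset.sum_boole]

/-- The two-function OSSS inequality. -/
theorem statement19_general {n : ℕ} (A : RandAlg n) (g : (Fin n → Bool) → ℝ) :
    ∑ r, A.w r * uniformCov (fun x => pm ((A.tree r).eval x)) g ≤
      ∑ i, readProb A i * l1Influence g i := by
  let z : Fin n → Bool := fun _ => false
  calc ∑ r, A.w r * uniformCov (fun x => pm ((A.tree r).eval x)) g
      ≤ ∑ r, A.w r * ∑ i, (A.tree r).newReadProb ∅ z i * l1Influence g i := by
        gcongr with r
        · exact A.w_nonneg r
        · simpa using (A.tree r).uniformCov_eval_le_sum_newReadProb_mul ∅ z g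
    _ = ∑ i, readProb A i * l1Influence g i := by
        simp only [readProb_eq_sum_mul_newReadProb A z, Finset.mul_sum, Finset.sum_mul, mul_assoc]
        exact Finset.sum_comm

/-- If `A` is a randomized decision-tree algorithm computing
the Boolean function `f` exactly on every input, with read probabilities
`δ_1, …, δ_n` on a uniformly random input, then `Var(f) ≤ ∑_i δ_i · I_i(f)`. -/
theorem statement19 (n : ℕ) (f : (Fin n → Bool) → Bool) (A : RandAlg n)
    (hcomp : ∀ r x, (A.tree r).eval x = f x) :
    pmVar f ≤ ∑ i : Fin n, readProb A i * influence f i := by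
  simpa only [hcomp, ← Finset.sum_mul, A.w_sum, one_mul, ← pmVar_eq_uniformCov, l1Influence_pm]
    using statement19_general A fun x => pm (f x)
end
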